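/- Let K be a field, A = K[x_1, ..., x_n], and F ∈ A^{l×l} with det(F) = p^t, where p ∈ K[x_1] is an irreducible polynomial and t is a positive integer. Assume the Smith form of F is diag(p^{s_1}, ..., p^{s_l}) with s_1 ≤ ... ≤ s_l. Suppose F is equivalent to diag(p^{s_1}, ..., p^{s_k}, p^s, ..., p^s) · G for some G ∈ A^{l×l}, where s_k ≤ s < s_{k+1}, and suppose J_i(F) = A for i = 1, ..., k. Then there exists U ∈ GL_l(A) such that U·G = diag(1, ..., 1, p, ..., p) · G_1 for some G_1 ∈ A^{l×l}, where the diagonal matrix has exactly k entries equal to 1 and l − k entries equal to p. -/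

import Mathlib

/-- Two `l × m` matrices over a commutative ring are equivalent if they differ by
left/right multiplication by square matrices with unit determinant. -/
def MatrixEquiv {B : Type*} [CommRing B] {l m : ℕ}
    (F G : Matrix (Fin l) (Fin m) B) : Prop :=
  ∃ (U : Matrix (Fin l) (Fin l) B) (V : Matrix (Fin m) (Fin m) B),
    IsUnit U.det ∧ IsUnit V.det ∧ F = U * G * V

/-- The set of all `i × i` minors of a matrix. -/
def minorsSet {R : Type*} [CommRing R] {l m : ℕ} (i : ℕ)
    (F : Matrix (Fin l) (Fin m) R) : Set R :=
  {a | ∃ (f : Fin i → Fin l) (g : Fin i → Fin m),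
      StrictMono f ∧ StrictMono g ∧ a = (F.submatrix f g).det}

/-- `d` is a greatest common divisor of the set `s`. -/
def IsGcdOf {R : Type*} [CommRing R] (d : R) (s : Set R) : Prop :=
  (∀ a ∈ s, d ∣ a) ∧ ∀ c : R, (∀ a ∈ s, c ∣ a) → c ∣ d

/-- `J_i(F) = A`: letting `d` be a gcd of the `i × i` minors of `F`, the `i × i`
reduced minors (the minors divided by `d`) generate the unit ideal. -/
def ReducedMinorsUnitIdeal {R : Type*} [CommRing R] {l m : ℕ} (i : ℕ)
    (F : Matrix (Fin l) (Fin m) R) : Prop :=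
  ∃ d : R, IsGcdOf d (minorsSet i F) ∧
    Ideal.span {b : R | d * b ∈ minorsSet i F} = ⊤

/-- The image of a univariate polynomial `p ∈ K[x₁]` in `A = K[x₁, …, x_{n+1}]`,
sending the variable to `x₁` (the variable of index `0`). -/
noncomputable def polyImage {K : Type*} [CommRing K] (n : ℕ) (p : Polynomial K) :
    MvPolynomial (Fin (n + 1)) K :=
  Polynomial.aeval (MvPolynomial.X 0) p

/-!
Since `J_k(F)` is the unit ideal, comparing powers of `p` in the minors of `F` of sizes `k` and
`k + 1` shows that `p`, together with the `k × k` minors of `G` whose bordered minors are all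
divisible by `p`, generates the unit ideal. A combination of the corresponding adjugates is then an
inner inverse `H` of `G` modulo `p`, and `e = 1 - G * H` is an idempotent modulo `p` with
`e * G ≡ 0`, of corank at most `k`. If `e` is conjugate modulo `p`, by an invertible matrix over `A`
itself, to a coordinate projection, then the rows of that matrix selected by the projection turn
`l - k` rows of `G` into multiples of `p`.

That such a conjugation exists is the Quillen–Suslin theorem over `A ⧸ (p) = (K[x₁] ⧸ (p))[x₂, …]`,
combined with lifting of the conjugating matrix to an invertible matrix over `A`. Both are obtained
at once by running the induction on the number of variables (Quillen patching, then Horrocks'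
criterion over a local ring) for idempotents modulo `p` in `A`, rather than for projective modules
over the quotient.
-/

open Polynomial

section Congruence

variable {A B ι κ μ : Type*} [CommRing A] [CommRing B] {p : A}

/-- Congruence of matrices modulo a ring element, entry by entry. -/
def MatModEq (p : A) (X Y : Matrix ι κ A) : Prop := ∀ i j, p ∣ X i j - Y i j

namespace MatModEq

theorem iff_map_mk {X Y : Matrix ι κ A} : MatModEq p X Y ↔
    X.map (Ideal.Quotient.mk (Ideal.span {p})) = Y.map (Ideal.Quotient.mk (Ideal.span {p})) := by
  simp only [MatModEq, ← Matrix.ext_iff, Matrix.map_apply, Ideal.Quotient.mk_eq_mk_iff_sub_mem,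
    Ideal.mem_span_singleton]

theorem iff_exists_add_smul {X Y : Matrix ι κ A} :
    MatModEq p X Y ↔ ∃ Z : Matrix ι κ A, X = Y + p • Z := by
  constructor
  · intro h
    choose Z hZ using h
    exact ⟨Matrix.of Z, by ext i j; simp [← hZ]⟩
  · rintro ⟨Z, rfl⟩ i j
    simp

theorem zero_iff {X Y : Matrix ι κ A} : MatModEq 0 X Y ↔ X = Y := by
  simp [MatModEq, sub_eq_zero, ← Matrix.ext_iff]

theorem of_eq {X Y : Matrix ι κ A} (h : X = Y) : MatModEq p X Y := by
  simp [MatModEq, h]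

theorem refl (X : Matrix ι κ A) : MatModEq p X X := of_eq rfl

theorem symm {X Y : Matrix ι κ A} (h : MatModEq p X Y) : MatModEq p Y X :=
  iff_map_mk.2 (iff_map_mk.1 h).symm

theorem trans {X Y Z : Matrix ι κ A} (h : MatModEq p X Y) (h' : MatModEq p Y Z) :
    MatModEq p X Z :=
  iff_map_mk.2 ((iff_map_mk.1 h).trans (iff_map_mk.1 h'))

instance : Trans (MatModEq p : Matrix ι κ A → Matrix ι κ A → Prop) (MatModEq p) (MatModEq p) :=
  ⟨trans⟩

theorem add {X Y X' Y' : Matrix ι κ A} (h : MatModEq p X Y) (h' : MatModEq p X' Y') :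
    MatModEq p (X + X') (Y + Y') := fun i j => by
  simpa only [Matrix.add_apply, add_sub_add_comm] using dvd_add (h i j) (h' i j)

theorem sub {X Y X' Y' : Matrix ι κ A} (h : MatModEq p X Y) (h' : MatModEq p X' Y') :
    MatModEq p (X - X') (Y - Y') := fun i j => by
  simpa only [Matrix.sub_apply, sub_sub_sub_comm] using dvd_sub (h i j) (h' i j)

theorem smul {X Y : Matrix ι κ A} (h : MatModEq p X Y) (a : A) : MatModEq p (a • X) (a • Y) :=
  fun i j => by
    simpa only [Matrix.smul_apply, smul_eq_mul, mul_sub] using (h i j).mul_left a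

theorem mul [Fintype κ] {X Y : Matrix ι κ A} {X' Y' : Matrix κ μ A} (h : MatModEq p X Y)
    (h' : MatModEq p X' Y') : MatModEq p (X * X') (Y * Y') := by
  rw [iff_map_mk] at *
  rw [Matrix.map_mul, Matrix.map_mul, h, h']

theorem mul_left [Fintype κ] {X' Y' : Matrix κ μ A} (X : Matrix ι κ A)
    (h' : MatModEq p X' Y') : MatModEq p (X * X') (X * Y') := mul (refl X) h'

theorem mul_right [Fintype κ] {X Y : Matrix ι κ A} (h : MatModEq p X Y)
    (X' : Matrix κ μ A) : MatModEq p (X * X') (Y * X') := mul h (refl X')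

theorem map {X Y : Matrix ι κ A} (h : MatModEq p X Y) (f : A →+* B) :
    MatModEq (f p) (X.map f) (Y.map f) := fun i j => by
  simpa only [Matrix.map_apply, map_sub] using map_dvd f (h i j)

theorem map_idempotent [Fintype ι] {e : Matrix ι ι A} (he : MatModEq p (e * e) e) (f : A →+* B) :
    MatModEq (f p) (e.map f * e.map f) (e.map f) := by
  rw [← Matrix.map_mul]
  exact he.map f

theorem map_eq {X Y : Matrix ι κ A} (h : MatModEq p X Y) {f : A →+* B} (hf : f p = 0) :
    X.map f = Y.map f :=
  zero_iff.1 (hf ▸ h.map f)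

end MatModEq

/-- The coordinate projection onto the indices in `T`. -/
def coordProj (A : Type*) [CommRing A] [DecidableEq ι] (T : Finset ι) : Matrix ι ι A :=
  Matrix.diagonal fun i => if i ∈ T then 1 else 0

theorem coordProj_map [DecidableEq ι] (T : Finset ι) (f : A →+* B) :
    (coordProj A T).map f = coordProj B T := by
  simp [coordProj, Matrix.diagonal_map (map_zero f), apply_ite f]

variable [Fintype ι]

/-- `W` intertwines `e` and `f` modulo `p`; for `p = 0` this is the equation `W * e = f * W`. -/
def Intertwines (p : A) (W e f : Matrix ι ι A) : Prop := MatModEq p (W * e) (f * W)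

namespace Intertwines

variable {V W e f g : Matrix ι ι A}

theorem zero_iff : Intertwines 0 W e f ↔ W * e = f * W := MatModEq.zero_iff

theorem comp (hV : Intertwines p V f g) (hW : Intertwines p W e f) :
    Intertwines p (V * W) e g :=
  calc
    MatModEq p (V * W * e) (V * (f * W)) := by rw [Matrix.mul_assoc]; exact hW.mul_left V
    MatModEq p _ (g * (V * W)) := by
      rw [← Matrix.mul_assoc, ← Matrix.mul_assoc]; exact hV.mul_right W

theorem add (hV : Intertwines p V e f) (hW : Intertwines p W e f) :
    Intertwines p (V + W) e f := by
  rw [Intertwines, add_mul, mul_add]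
  exact MatModEq.add hV hW

theorem sub (hV : Intertwines p V e f) (hW : Intertwines p W e f) :
    Intertwines p (V - W) e f := by
  rw [Intertwines, sub_mul, mul_sub]
  exact MatModEq.sub hV hW

theorem smul (hW : Intertwines p W e f) (a : A) : Intertwines p (a • W) e f := by
  rw [Intertwines, Matrix.smul_mul, Matrix.mul_smul]
  exact MatModEq.smul hW a

theorem map (hW : Intertwines p W e f) (φ : A →+* B) :
    Intertwines (φ p) (W.map φ) (e.map φ) (f.map φ) := by
  rw [Intertwines, ← Matrix.map_mul, ← Matrix.map_mul]
  exact MatModEq.map hW φ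

theorem congr {e' f' : Matrix ι ι A} (hW : Intertwines p W e f) (he : MatModEq p e e')
    (hf : MatModEq p f f') : Intertwines p W e' f' :=
  ((he.symm.mul_left W).trans hW).trans (hf.mul_right W)

variable [DecidableEq ι]

theorem one (e : Matrix ι ι A) : Intertwines p 1 e e := by
  rw [Intertwines, one_mul, mul_one]
  exact MatModEq.refl e

theorem inv (hdet : IsUnit W.det) (hW : Intertwines p W e f) : Intertwines p W⁻¹ f e := by
  have h := ((MatModEq.symm hW).mul_left W⁻¹).mul_right W⁻¹
  rwa [Matrix.mul_assoc, Matrix.mul_assoc f, Matrix.mul_nonsing_inv W hdet, mul_one,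
    ← Matrix.mul_assoc W⁻¹ W, Matrix.nonsing_inv_mul W hdet, one_mul] at h

end Intertwines

variable [DecidableEq ι]

theorem isUnit_det_map {W : Matrix ι ι A} (hW : IsUnit W.det) (φ : A →+* B) :
    IsUnit (W.map φ).det := by
  rw [← RingHom.mapMatrix_apply, ← RingHom.map_det]
  exact hW.map φ

theorem isUnit_det_mul {V W : Matrix ι ι A} (hV : IsUnit V.det) (hW : IsUnit W.det) :
    IsUnit (V * W).det := by
  rw [Matrix.det_mul]
  exact hV.mul hW

/-- `e` and `f` are conjugate modulo `p` by an invertible matrix over the ring itself (not merely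
over its quotient by `p`). -/
def ConjMod (p : A) (e f : Matrix ι ι A) : Prop :=
  ∃ W : Matrix ι ι A, IsUnit W.det ∧ Intertwines p W e f

namespace ConjMod

variable {e f g : Matrix ι ι A}

theorem of_matModEq (h : MatModEq p e f) : ConjMod p e f :=
  ⟨1, by simp, (Intertwines.one e).congr (MatModEq.refl e) h⟩

theorem refl (e : Matrix ι ι A) : ConjMod p e e := of_matModEq (MatModEq.refl e)

theorem symm : ConjMod p e f → ConjMod p f e := fun ⟨W, hW, h⟩ =>
  ⟨W⁻¹, Matrix.isUnit_nonsing_inv_det W hW, h.inv hW⟩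

theorem trans : ConjMod p e f → ConjMod p f g → ConjMod p e g :=
  fun ⟨V, hV, h⟩ ⟨W, hW, h'⟩ => ⟨W * V, isUnit_det_mul hW hV, h'.comp h⟩

theorem map (φ : A →+* B) : ConjMod p e f → ConjMod (φ p) (e.map φ) (f.map φ) :=
  fun ⟨W, hW, h⟩ => ⟨W.map φ, isUnit_det_map hW φ, h.map φ⟩

theorem map_comp {A₀ : Type*} [CommRing A₀] {e₀ : Matrix ι ι A₀} {f₁ f₂ : A₀ →+* A}
    (h : ConjMod p (e₀.map f₁) (e₀.map f₂)) (φ : A →+* B) :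
    ConjMod (φ p) (e₀.map (φ.comp f₁)) (e₀.map (φ.comp f₂)) :=
  h.map φ

end ConjMod

variable (T : Finset ι)

theorem coordProj_mul_apply (X : Matrix ι κ A) (i : ι) (j : κ) :
    (coordProj A T * X) i j = if i ∈ T then X i j else 0 := by
  simp [coordProj, Matrix.diagonal_mul]

theorem mul_coordProj_apply (X : Matrix κ ι A) (i : κ) (j : ι) :
    (X * coordProj A T) i j = if j ∈ T then X i j else 0 := by
  simp [coordProj, Matrix.mul_diagonal]

theorem coordProj_mul_self : coordProj A T * coordProj A T = coordProj A T := by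
  ext i j
  rw [coordProj_mul_apply]
  by_cases h : i ∈ T <;> simp [coordProj, h, Matrix.diagonal_apply]

variable {T} in
theorem intertwines_coordProj_iff {W : Matrix ι ι A} :
    Intertwines p W (coordProj A T) (coordProj A T) ↔
      ∀ a b, ¬(a ∈ T ↔ b ∈ T) → p ∣ W a b := by
  refine forall₂_congr fun a b => ?_
  rw [mul_coordProj_apply, coordProj_mul_apply]
  by_cases ha : a ∈ T <;> by_cases hb : b ∈ T <;> simp [ha, hb]

/-- `e` is conjugate modulo `p` to a coordinate projection. This is how the freeness of the image
of an idempotent over `A ⧸ (p)`, compatibly with lifting to `A`, is expressed. -/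
def Diagonalizable (p : A) (e : Matrix ι ι A) : Prop :=
  ∃ T : Finset ι, ConjMod p e (coordProj A T)

namespace Diagonalizable

variable {e e' : Matrix ι ι A}

theorem of_conjMod (h : ConjMod p e e') : Diagonalizable p e' → Diagonalizable p e :=
  fun ⟨T, hT⟩ => ⟨T, h.trans hT⟩

theorem map (φ : A →+* B) : Diagonalizable p e → Diagonalizable (φ p) (e.map φ) :=
  fun ⟨T, hT⟩ => ⟨T, by rw [← coordProj_map T φ]; exact hT.map φ⟩

theorem of_map_ringEquiv (φ : A ≃+* B)
    (h : Diagonalizable (φ p) (e.map φ)) : Diagonalizable p e := by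
  have h' := h.map (φ.symm : B →+* A)
  have he : (e.map φ).map (φ.symm : B →+* A) = e := by ext i j; simp
  rwa [he, RingEquiv.coe_toRingHom, φ.symm_apply_apply] at h'

end Diagonalizable

end Congruence

section ProperFractions

variable {R B : Type*} [CommRing R] [CommRing B] [Algebra R[X] B] [Algebra R B]
  [IsScalarTower R R[X] B]

variable (R B) in
/-- Fractions `g / f` with `f` monic and `deg g ≤ deg f`. -/
def properFractions : Subalgebra R B where
  carrier := {b | ∃ f g : R[X], f.Monic ∧ g.natDegree ≤ f.natDegree ∧
    algebraMap R[X] B f * b = algebraMap R[X] B g}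
  mul_mem' := by
    rintro b b' ⟨f, g, hf, hd, h⟩ ⟨f', g', hf', hd', h'⟩
    refine ⟨f * f', g * g', hf.mul hf', ?_, ?_⟩
    · rw [hf.natDegree_mul hf']
      exact natDegree_mul_le.trans (add_le_add hd hd')
    · rw [map_mul, map_mul, ← h, ← h']
      ring
  add_mem' := by
    rintro b b' ⟨f, g, hf, hd, h⟩ ⟨f', g', hf', hd', h'⟩
    refine ⟨f * f', g * f' + f * g', hf.mul hf', ?_, ?_⟩
    · rw [hf.natDegree_mul hf']
      refine natDegree_add_le_of_degree_le ?_ ?_ <;> exact natDegree_mul_le.trans (by lia)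
    · rw [map_mul, map_add, map_mul, map_mul, ← h, ← h']
      ring
  algebraMap_mem' r := ⟨1, C r, monic_one, by simp, by
    simp [IsScalarTower.algebraMap_apply R R[X] B]⟩

theorem det_mem_properFractions {ι : Type*} [DecidableEq ι] [Fintype ι] {M : Matrix ι ι B}
    (h : ∀ a b, M a b ∈ properFractions R B) : M.det ∈ properFractions R B := by
  rw [Matrix.det_apply]
  refine sum_mem fun σ _ => ?_
  rw [Units.smul_def]
  exact zsmul_mem (prod_mem fun i _ => h _ _) _

end ProperFractions

section MonicLocalization

variable (R : Type*) [CommRing R]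

/-- The multiplicative set of monic polynomials. Localizing `R[X]` at it replaces `R[X]` by
`K(X)[…]` when `R = K[…]`, while keeping enough control on degrees for Horrocks' argument. -/
def monicSubmonoid : Submonoid R[X] where
  carrier := {f | f.Monic}
  mul_mem' := Monic.mul
  one_mem' := monic_one

variable {R}

theorem monicSubmonoid_le_nonZeroDivisors : monicSubmonoid R ≤ nonZeroDivisors R[X] :=
  fun _ hf => Monic.mem_nonZeroDivisors hf

theorem mem_map_C_iff_map_mk_eq_zero {I : Ideal R} {g : R[X]} :
    g ∈ I.map C ↔ g.map (Ideal.Quotient.mk I) = 0 := by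
  rw [Ideal.mem_map_C_iff, Polynomial.ext_iff]
  simp [Ideal.Quotient.eq_zero_iff_mem]

theorem mem_map_C_of_mul_monic_mem {I : Ideal R} {f g : R[X]} (hf : f.Monic)
    (h : g * f ∈ I.map C) : g ∈ I.map C := by
  rw [mem_map_C_iff_map_mk_eq_zero, Polynomial.map_mul] at h
  exact mem_map_C_iff_map_mk_eq_zero.2 ((hf.map _).mul_left_eq_zero_iff.1 h)

variable {B : Type*} [CommRing B] [Algebra R[X] B] [IsLocalization (monicSubmonoid R) B]

theorem exists_monic_mul_eq (b : B) : ∃ f g : R[X], f.Monic ∧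
    algebraMap R[X] B f * b = algebraMap R[X] B g := by
  obtain ⟨⟨g, f⟩, h⟩ := IsLocalization.surj (monicSubmonoid R) b
  exact ⟨f, g, f.2, by rw [mul_comm]; exact h⟩

theorem isUnit_algebraMap_of_monic {f : R[X]} (hf : f.Monic) : IsUnit (algebraMap R[X] B f) :=
  IsLocalization.map_units B (⟨f, hf⟩ : monicSubmonoid R)

theorem isUnit_algebraMap_of_isUnit_leadingCoeff {f : R[X]} (hf : IsUnit f.leadingCoeff) :
    IsUnit (algebraMap R[X] B f) := by
  obtain ⟨u, hu⟩ := hf.exists_left_inv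
  have hmonic : (C u * f).Monic := by
    rw [Monic, leadingCoeff_C_mul_of_isUnit (.of_mul_eq_one _ hu), hu]
  have h := isUnit_algebraMap_of_monic (B := B) hmonic
  rw [map_mul] at h
  exact isUnit_of_mul_isUnit_right h

variable (B) in
theorem algebraMap_monicLocalization_injective : Function.Injective (algebraMap R[X] B) :=
  IsLocalization.injective B monicSubmonoid_le_nonZeroDivisors

theorem mem_map_C_of_algebraMap_mem {I : Ideal R} {g : R[X]}
    (h : algebraMap R[X] B g ∈ (I.map C).map (algebraMap R[X] B)) : g ∈ I.map C := by
  rw [IsLocalization.mem_map_algebraMap_iff (monicSubmonoid R)] at h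
  obtain ⟨⟨⟨a, ha⟩, f, hf⟩, h⟩ := h
  rw [← map_mul] at h
  refine mem_map_C_of_mul_monic_mem hf ?_
  rwa [algebraMap_monicLocalization_injective B h]

theorem MatModEq.of_map_algebraMap {ι κ : Type*} {p : R} {X Y : Matrix ι κ R[X]}
    (h : MatModEq (algebraMap R[X] B (C p)) (X.map (algebraMap R[X] B))
      (Y.map (algebraMap R[X] B))) : MatModEq (C p) X Y := fun i j => by
  have hij := h i j
  simp only [Matrix.map_apply, ← map_sub, ← Ideal.mem_span_singleton, ← Set.image_singleton,
    ← Ideal.map_span] at hij ⊢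
  exact mem_map_C_of_algebraMap_mem hij

theorem exists_monic_smul_matrix {ι : Type*} [Finite ι] (D : Matrix ι ι B) :
    ∃ (F : R[X]) (Q : Matrix ι ι R[X]),
      F.Monic ∧ Q.map (algebraMap R[X] B) = algebraMap R[X] B F • D := by
  obtain ⟨F, hF⟩ := IsLocalization.exist_integer_multiples_of_finite (monicSubmonoid R)
    fun ab : ι × ι => D ab.1 ab.2
  choose Q hQ using hF
  exact ⟨F, Matrix.of fun a b => Q (a, b), F.2, by ext a b; simp [hQ, Algebra.smul_def]⟩

variable [Algebra R B] [IsScalarTower R R[X] B]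

theorem exists_eq_algebraMap_add_properFraction (b : B) :
    ∃ h : R[X], ∃ o ∈ properFractions R B, b = algebraMap R[X] B h + o := by
  obtain ⟨f, g, hf, hfg⟩ := exists_monic_mul_eq (R := R) b
  refine ⟨g /ₘ f, b - algebraMap R[X] B (g /ₘ f),
    ⟨f, g %ₘ f, hf, natDegree_modByMonic_le _ hf, ?_⟩, by ring⟩
  have hdiv := congrArg (algebraMap R[X] B) (modByMonic_add_div g f)
  rw [map_add, map_mul] at hdiv
  rw [mul_sub, hfg, ← hdiv]
  ring

end MonicLocalization

section BlockIdeal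

variable {R : Type*} [CommRing R] {ι : Type*} [DecidableEq ι]

/-- The entries at `(a, b)` of the matrices with entries in `m ∋ p` that commute modulo `p` with the
coordinate projection onto `T`: all of `m` in the two diagonal blocks, only `(p)` outside. -/
def blockIdeal (m : Ideal R) (p : R) (T : Finset ι) (a b : ι) : Ideal R :=
  if a ∈ T ↔ b ∈ T then m else Ideal.span {p}

variable {m : Ideal R} {p : R} {T : Finset ι}

theorem blockIdeal_le (hp : p ∈ m) (a b : ι) : blockIdeal m p T a b ≤ m := by
  unfold blockIdeal
  split_ifs
  · exact le_rfl
  · rwa [Ideal.span_singleton_le_iff_mem]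

theorem blockIdeal_mul_le (hp : p ∈ m) (a b c : ι) :
    blockIdeal m p T a b * blockIdeal m p T b c ≤ m * blockIdeal m p T a c := by
  by_cases hab : (a ∈ T ↔ b ∈ T)
  · have h : blockIdeal m p T b c = blockIdeal m p T a c := by simp only [blockIdeal, hab]
    rw [h]
    exact Ideal.mul_mono_left (blockIdeal_le hp a b)
  by_cases hbc : (b ∈ T ↔ c ∈ T)
  · have h : blockIdeal m p T a b = blockIdeal m p T a c := by simp only [blockIdeal, hbc]
    rw [h, mul_comm]
    exact Ideal.mul_mono_left (blockIdeal_le hp b c)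
  · rw [show blockIdeal m p T a c = m from if_pos (by tauto)]
    exact Ideal.mul_mono (blockIdeal_le hp a b) (blockIdeal_le hp b c)

variable {S : Type*} [CommRing S] [Algebra R S] [Fintype ι]

/-- Matrices over the `R`-algebra `S` with entries in the extension of `m` that intertwine `e` and
`f` modulo `p`; adding one of them to an intertwiner does not change it modulo `m`. -/
def intertwiners (m : Ideal R) (p : S) (e f : Matrix ι ι S) : Submodule R (Matrix ι ι S) where
  carrier := {Y | Intertwines p Y e f ∧ ∀ a b, Y a b ∈ m.map (algebraMap R S)}
  add_mem' h h' := ⟨h.1.add h'.1, fun a b => add_mem (h.2 a b) (h'.2 a b)⟩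
  zero_mem' := ⟨MatModEq.of_eq (by simp), fun _ _ => zero_mem _⟩
  smul_mem' r Y h := by
    rw [← algebraMap_smul S r Y]
    exact ⟨h.1.smul _, fun a b => Ideal.mul_mem_left _ _ (h.2 a b)⟩

theorem mul_mem_intertwiners {p : S} {e f g Y q : Matrix ι ι S} (hY : Y ∈ intertwiners m p f g)
    (hq : Intertwines p q e f) : Y * q ∈ intertwiners m p e g :=
  ⟨hY.1.comp hq, fun _ _ => sum_mem fun _ _ => Ideal.mul_mem_right _ _ (hY.2 _ _)⟩

/-- The intertwiners of a coordinate projection with itself, which have a description by entries. -/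
abbrev blockMatrices (S : Type*) [CommRing S] [Algebra R S] (m : Ideal R) (p : R) (T : Finset ι) :
    Submodule R (Matrix ι ι S) :=
  intertwiners m (algebraMap R S p) (coordProj S T) (coordProj S T)

theorem mem_blockMatrices_iff (hp : p ∈ m) {M : Matrix ι ι S} :
    M ∈ blockMatrices S m p T ↔
      ∀ a b, M a b ∈ (blockIdeal m p T a b).map (algebraMap R S) := by
  have hspan (x : S) : x ∈ (Ideal.span {p}).map (algebraMap R S) ↔ algebraMap R S p ∣ x := by
    rw [Ideal.map_span, Set.image_singleton, Ideal.mem_span_singleton]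
  refine ⟨fun h a b => ?_, fun h => ⟨intertwines_coordProj_iff.2 fun a b hab => ?_,
    fun a b => Ideal.map_mono (blockIdeal_le hp a b) (h a b)⟩⟩
  · by_cases hab : (a ∈ T ↔ b ∈ T)
    · rw [blockIdeal, if_pos hab]
      exact h.2 a b
    · rw [blockIdeal, if_neg hab, hspan]
      exact intertwines_coordProj_iff.1 h.1 a b hab
  · rw [← hspan, ← show blockIdeal m p T a b = _ from if_neg hab]
    exact h a b

theorem single_smul_mem_blockMatrices (hp : p ∈ m) {a b : ι} {r : R}
    (hr : r ∈ blockIdeal m p T a b) (β : S) :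
    Matrix.single a b (r • β) ∈ blockMatrices S m p T := by
  refine (mem_blockMatrices_iff hp).2 fun a' b' => ?_
  rw [Matrix.single_apply, Algebra.smul_def]
  split_ifs with h
  · rw [← h.1, ← h.2]
    exact Ideal.mul_mem_right _ _ (Ideal.mem_map_of_mem _ hr)
  · exact zero_mem _

theorem mem_smul_blockMatrices (hp : p ∈ m) {M : Matrix ι ι S}
    (h : ∀ a b, M a b ∈ (m * blockIdeal m p T a b).map (algebraMap R S)) :
    M ∈ m • blockMatrices S m p T := by
  rw [Matrix.matrix_eq_sum_single M]
  refine sum_mem fun a _ => sum_mem fun b _ => ?_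
  have hM : M a b ∈ m • (blockIdeal m p T a b • (⊤ : Submodule R S)) := by
    rw [← Submodule.mul_smul, Ideal.smul_top_eq_map]
    exact h a b
  have hsingle := Submodule.mem_map_of_mem (f := Matrix.singleLinearMap R a b) hM
  rw [Submodule.map_smul''] at hsingle
  refine Submodule.smul_mono le_rfl ?_ hsingle
  exact Submodule.map_le_iff_le_comap.2 <| Submodule.smul_le.2 fun r hr β _ =>
    single_smul_mem_blockMatrices hp hr β

theorem mul_mem_smul_blockMatrices (hp : p ∈ m) {M N : Matrix ι ι S}
    (hM : M ∈ blockMatrices S m p T) (hN : N ∈ blockMatrices S m p T) :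
    M * N ∈ m • blockMatrices S m p T := by
  refine mem_smul_blockMatrices hp fun a c => sum_mem fun b _ => ?_
  refine Ideal.map_mono (blockIdeal_mul_le hp a b c) ?_
  rw [Ideal.map_mul]
  exact Ideal.mul_mem_mul ((mem_blockMatrices_iff hp).1 hM a b)
    ((mem_blockMatrices_iff hp).1 hN b c)

end BlockIdeal

section HorrocksDecomposition

variable {R : Type*} [CommRing R] {ι : Type*} [DecidableEq ι]
variable {B : Type*} [CommRing B] [Algebra R[X] B] [Algebra R B] [IsScalarTower R R[X] B]
variable {m : Ideal R} {p : R} {T : Finset ι}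

variable (R B) in
/-- The image in `B` of the polynomials of degree less than `d`. -/
noncomputable def boundedPolys (d : ℕ) : Submodule R B :=
  (degreeLT R d).map (IsScalarTower.toAlgHom R R[X] B).toLinearMap

variable (ι R B) in
/-- Matrices of proper fractions, the complement of the polynomial ones when a matrix over `B` is
split. -/
def properMatrices : Submodule R (Matrix ι ι B) where
  carrier := {M | ∀ a b, M a b ∈ properFractions R B}
  add_mem' h h' a b := add_mem (h a b) (h' a b)
  zero_mem' _ _ := zero_mem _
  smul_mem' r _ h a b := Subalgebra.smul_mem _ (h a b) r

variable (m p T B) in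
/-- Block matrices with polynomial entries of degree less than `d`: the finitely generated module
to which Nakayama's lemma is applied. -/
noncomputable def boundedBlockMatrices (d : ℕ) : Submodule R (Matrix ι ι B) :=
  ⨆ ab : ι × ι, (blockIdeal m p T ab.1 ab.2 • boundedPolys R B d).map
    (Matrix.singleLinearMap R ab.1 ab.2)

theorem boundedBlockMatrices_fg [Finite ι] [IsNoetherianRing R] (d : ℕ) :
    (boundedBlockMatrices B m p T d).FG := by
  have hfg : (boundedPolys R B d).FG := by
    refine Submodule.FG.map _ ?_
    classical
    rw [degreeLT_eq_span_X_pow]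
    exact ⟨_, rfl⟩
  exact Submodule.fg_iSup _ fun ab => (hfg.of_le Submodule.smul_le_right).map _

theorem boundedBlockMatrices_le_iff {d : ℕ} {N : Submodule R (Matrix ι ι B)} :
    boundedBlockMatrices B m p T d ≤ N ↔ ∀ a b, ∀ r ∈ blockIdeal m p T a b,
      ∀ g : R[X], g ∈ degreeLT R d → Matrix.single a b (r • algebraMap R[X] B g) ∈ N := by
  simp only [boundedBlockMatrices, boundedPolys, iSup_le_iff, Prod.forall,
    Submodule.map_le_iff_le_comap, Submodule.smul_le, Submodule.mem_map,
    forall_exists_index, and_imp, forall_apply_eq_imp_iff₂]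
  rfl

variable [Fintype ι]

/-- The map `Y ↦ Y * Di` from polynomial matrices to matrices over the localization `B`. -/
noncomputable def mulRightLinear (Di : Matrix ι ι B) : Matrix ι ι R[X] →ₗ[R] Matrix ι ι B :=
  LinearMap.mulRight R Di ∘ₗ (IsScalarTower.toAlgHom R R[X] B).mapMatrix.toLinearMap

theorem mulRightLinear_apply (Di : Matrix ι ι B) (Y : Matrix ι ι R[X]) :
    mulRightLinear Di Y = Y.map (algebraMap R[X] B) * Di := rfl

theorem mulRightLinear_single_smul_mul (Di : Matrix ι ι B) (a b : ι) (r : R) (h : R[X])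
    (Y : Matrix ι ι R[X]) : mulRightLinear Di (Matrix.single a b (r • h) * Y) =
      Matrix.single a b (r • algebraMap R[X] B h) * mulRightLinear Di Y := by
  simp only [mulRightLinear_apply, Matrix.map_mul, Matrix.map_single, Matrix.mul_assoc,
    Algebra.smul_def, map_mul, IsScalarTower.algebraMap_apply R R[X] B]

theorem boundedBlockMatrices_le_map_sup_smul (hp : p ∈ m) {e q : Matrix ι ι R[X]}
    {Di : Matrix ι ι B} (hq : Intertwines (C p) q e (coordProj R[X] T))
    (hqDi : mulRightLinear Di q - 1 ∈ blockMatrices B m p T) (d : ℕ) :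
    boundedBlockMatrices B m p T d ≤
      (intertwiners m (C p) e (coordProj R[X] T)).map (mulRightLinear Di) ⊔
        m • blockMatrices B m p T := by
  refine boundedBlockMatrices_le_iff.2 fun a b r hr g _ => ?_
  have hsplit : Matrix.single a b (r • algebraMap R[X] B g) =
      mulRightLinear Di (Matrix.single a b (r • g) * q) -
        Matrix.single a b (r • algebraMap R[X] B g) * (mulRightLinear Di q - 1) := by
    rw [mulRightLinear_single_smul_mul, mul_sub, mul_one, sub_sub_cancel]
  rw [hsplit]
  exact sub_mem
    (Submodule.mem_sup_left <| Submodule.mem_map_of_mem <|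
      mul_mem_intertwiners (single_smul_mem_blockMatrices hp hr g) hq)
    (Submodule.mem_sup_right <|
      mul_mem_smul_blockMatrices hp (single_smul_mem_blockMatrices hp hr _) hqDi)

variable [IsLocalization (monicSubmonoid R) B]

/-- Division by the common denominator `F` of `D` leaves a polynomial of bounded degree, a multiple
of `F`, which `Q = F • D` turns into an intertwiner, and a proper fraction. -/
theorem blockMatrices_le_bounded_sup_map_sup_proper [Nontrivial R] (hp : p ∈ m)
    {e Q : Matrix ι ι R[X]} {Di : Matrix ι ι B} {F : R[X]} (hF : F.Monic)
    (hQ : Intertwines (C p) Q e (coordProj R[X] T))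
    (hQDi : mulRightLinear Di Q = algebraMap R[X] B F • 1) :
    blockMatrices B m p T ≤ boundedBlockMatrices B m p T F.natDegree ⊔
      ((intertwiners m (C p) e (coordProj R[X] T)).map (mulRightLinear Di) ⊔
        blockMatrices B m p T ⊓ properMatrices R ι B) := by
  intro M hM
  rw [Matrix.matrix_eq_sum_single M]
  refine sum_mem fun a _ => sum_mem fun b _ => ?_
  have hMab : M a b ∈ blockIdeal m p T a b • (⊤ : Submodule R B) := by
    rw [Ideal.smul_top_eq_map]
    exact (mem_blockMatrices_iff hp).1 hM a b
  rw [← Matrix.singleLinearMap_apply (R := R), ← Submodule.mem_comap]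
  refine Submodule.smul_le.2 (fun r hr β _ => ?_) hMab
  obtain ⟨h, o, ho, rfl⟩ := exists_eq_algebraMap_add_properFraction (R := R) β
  rw [← modByMonic_add_div h F, map_add, smul_add, smul_add, Submodule.mem_comap, map_add, map_add]
  refine add_mem (add_mem ?bounded ?multiple) ?proper
  case bounded =>
    refine Submodule.mem_sup_left (boundedBlockMatrices_le_iff.1 le_rfl a b r hr _ ?_)
    exact mem_degreeLT.2 ((degree_modByMonic_lt _ hF).trans_le degree_le_natDegree)
  case multiple =>
    refine Submodule.mem_sup_right <| Submodule.mem_sup_left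
      ⟨_, mul_mem_intertwiners (single_smul_mem_blockMatrices hp hr (h /ₘ F)) hQ, ?_⟩
    rw [mulRightLinear_single_smul_mul, hQDi, Matrix.mul_smul, mul_one,
      Matrix.singleLinearMap_apply, Matrix.smul_single, map_mul, smul_comm, smul_eq_mul]
  case proper =>
    refine Submodule.mem_sup_right <| Submodule.mem_sup_right
      ⟨single_smul_mem_blockMatrices hp hr o, fun a' b' => ?_⟩
    rw [Matrix.singleLinearMap_apply, Matrix.single_apply]
    split_ifs
    · exact Subalgebra.smul_mem _ ho _
    · exact zero_mem _

theorem exists_intertwiner_mulRightLinear_eq_add [IsLocalRing R] [IsNoetherianRing R]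
    (hp : p ∈ IsLocalRing.maximalIdeal R) {e q : Matrix ι ι R[X]} {D : Matrix ι ι B}
    (hD : IsUnit D.det)
    (hDe : Intertwines (algebraMap R[X] B (C p)) D (e.map (algebraMap R[X] B)) (coordProj B T))
    (hq : Intertwines (C p) q e (coordProj R[X] T))
    (hqD : mulRightLinear D⁻¹ q - 1 ∈ blockMatrices B (IsLocalRing.maximalIdeal R) p T) :
    ∃ Y ∈ intertwiners (IsLocalRing.maximalIdeal R) (C p) e (coordProj R[X] T),
      ∃ o ∈ blockMatrices B (IsLocalRing.maximalIdeal R) p T ⊓ properMatrices R ι B,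
        mulRightLinear D⁻¹ q = mulRightLinear D⁻¹ Y + (1 + o) := by
  obtain ⟨F, Q, hF, hQ⟩ := exists_monic_smul_matrix (R := R) D
  have hQe : Intertwines (C p) Q e (coordProj R[X] T) := by
    refine MatModEq.of_map_algebraMap (B := B) ?_
    rw [Matrix.map_mul, Matrix.map_mul, hQ, coordProj_map]
    exact hDe.smul _
  have hQD : mulRightLinear D⁻¹ Q = algebraMap R[X] B F • 1 := by
    rw [mulRightLinear_apply, hQ, Matrix.smul_mul, Matrix.mul_nonsing_inv D hD]
  have hle := blockMatrices_le_bounded_sup_map_sup_proper hp hF hQe hQD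
  set m := IsLocalRing.maximalIdeal R
  set Z := (intertwiners m (C p) e (coordProj R[X] T)).map (mulRightLinear D⁻¹) ⊔
    blockMatrices B m p T ⊓ properMatrices R ι B
  have hbounded : boundedBlockMatrices B m p T F.natDegree ≤ Z := by
    refine Submodule.le_of_le_smul_of_le_jacobson_bot (I := m) (boundedBlockMatrices_fg _)
      (IsLocalRing.jacobson_eq_maximalIdeal _ bot_ne_top).ge
      ((boundedBlockMatrices_le_map_sup_smul hp hq hqD _).trans ?_)
    refine sup_le (le_sup_left.trans le_sup_left) ((Submodule.smul_mono le_rfl hle).trans ?_)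
    rw [Submodule.smul_sup]
    exact sup_le le_sup_right (Submodule.smul_le_right.trans le_sup_left)
  obtain ⟨_, ⟨Y, hY, rfl⟩, o, ho, h⟩ := Submodule.mem_sup.1 (hle.trans (sup_le hbounded le_rfl) hqD)
  exact ⟨Y, hY, o, ho, by rw [add_left_comm, h, add_sub_cancel]⟩

end HorrocksDecomposition

section UnitDeterminant

open IsLocalRing (maximalIdeal)

variable {R : Type*} [CommRing R] [IsLocalRing R]

theorem isUnit_of_dvd_monic {w g v : R[X]} (hg : g.Monic) (hwg : w ∣ g)
    (hw : w * v - 1 ∈ (maximalIdeal R).map C) : IsUnit w := by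
  have hle : Ideal.span {g} ≤ Ideal.span {w} := Ideal.span_singleton_le_span_singleton.2 hwg
  have hfinite : Module.Finite R (R[X] ⧸ Ideal.span {w}) :=
    have := hg.finite_quotient
    .of_surjective (Ideal.Quotient.factorₐ R hle).toLinearMap
      (Ideal.Quotient.factor_surjective hle)
  have htop : (maximalIdeal R).map (algebraMap R (R[X] ⧸ Ideal.span {w})) = ⊤ := by
    have h := Ideal.mem_map_of_mem (Ideal.Quotient.mk (Ideal.span {w})) hw
    rw [map_sub, map_mul, Ideal.Quotient.mk_singleton_self, zero_mul, zero_sub, map_one,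
      Ideal.map_map, neg_mem_iff] at h
    exact (Ideal.eq_top_iff_one _).2 h
  have hbot : (⊤ : Submodule R (R[X] ⧸ Ideal.span {w})) = ⊥ := by
    refine Submodule.eq_bot_of_le_smul_of_le_jacobson_bot (maximalIdeal R) _ hfinite.fg_top ?_
      (IsLocalRing.jacobson_eq_maximalIdeal _ bot_ne_top).ge
    rw [Ideal.smul_top_eq_map, htop, Submodule.restrictScalars_top]
  have hsub := (Submodule.subsingleton_iff R).1 (subsingleton_of_bot_eq_top hbot.symm)
  rw [Ideal.Quotient.subsingleton_iff, Ideal.span_singleton_eq_top] at hsub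
  exact hsub

variable {B : Type*} [CommRing B] [Algebra R[X] B] [IsLocalization (monicSubmonoid R) B]
variable [Algebra R B] [IsScalarTower R R[X] B]

theorem exists_mul_eq_monic_of_mem_properFractions {b : B} (hb : b ∈ properFractions R B)
    (hb1 : b - 1 ∈ (maximalIdeal R).map (algebraMap R B)) :
    ∃ f g : R[X], g.Monic ∧ algebraMap R[X] B f * b = algebraMap R[X] B g := by
  obtain ⟨f, g, hf, hdeg, hfg⟩ := hb
  have hgf : g - f ∈ (maximalIdeal R).map C := by
    refine mem_map_C_of_algebraMap_mem (B := B) ?_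
    rw [map_sub, ← hfg, Ideal.map_map, ← Polynomial.algebraMap_eq, ← IsScalarTower.algebraMap_eq,
      ← mul_sub_one]
    exact Ideal.mul_mem_left _ _ hb1
  have hcoeff : IsUnit (g.coeff f.natDegree) := by
    by_contra hu
    have hmem := sub_mem ((IsLocalRing.mem_maximalIdeal _).2 hu)
      (Ideal.mem_map_C_iff.1 hgf f.natDegree)
    rw [coeff_sub, hf.coeff_natDegree, sub_sub_cancel] at hmem
    exact (Ideal.ne_top_iff_one _).1 (IsLocalRing.maximalIdeal.isMaximal R).ne_top hmem
  obtain ⟨u, hu⟩ := hcoeff.exists_left_inv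
  refine ⟨C u * f, C u * g, ?_, by rw [map_mul, mul_assoc, hfg, map_mul]⟩
  exact monic_of_natDegree_le_of_coeff_eq_one f.natDegree
    ((natDegree_C_mul_le _ _).trans hdeg) (by rw [coeff_C_mul, hu])

theorem exists_monic_dvd_of_algebraMap_mul {w : R[X]} {b c : B}
    (hw : algebraMap R[X] B w * c = b) (hb : b ∈ properFractions R B)
    (hb1 : b - 1 ∈ (maximalIdeal R).map (algebraMap R B)) : ∃ g : R[X], g.Monic ∧ w ∣ g := by
  obtain ⟨f, g, hg, hfg⟩ := exists_mul_eq_monic_of_mem_properFractions hb hb1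
  obtain ⟨f', h, hf', hh⟩ := exists_monic_mul_eq (R := R) c
  refine ⟨g * f', hg.mul hf', h * f, algebraMap_monicLocalization_injective B ?_⟩
  simp only [map_mul, ← hfg, ← hh, ← hw]
  ring

variable {ι : Type*} [DecidableEq ι] [Fintype ι]

theorem det_one_add_sub_one_mem {S : Type*} [CommRing S] {J : Ideal S} {o : Matrix ι ι S}
    (h : ∀ a b, o a b ∈ J) : (1 + o).det - 1 ∈ J := by
  have ho : (Ideal.Quotient.mk J).mapMatrix o = 0 := by
    ext a b
    simpa using Ideal.Quotient.eq_zero_iff_mem.2 (h a b)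
  rw [← Ideal.Quotient.eq_zero_iff_mem, map_sub, RingHom.map_det, map_add, map_one, ho, add_zero,
    Matrix.det_one, map_one, sub_self]

theorem isUnit_det_of_mulRightLinear_eq_one_add {W : Matrix ι ι R[X]} {Di o : Matrix ι ι B}
    (hDi : mulRightLinear Di W = 1 + o) (ho : o ∈ properMatrices R ι B)
    (hom : ∀ a b, o a b ∈ (maximalIdeal R).map (algebraMap R B)) {v : R[X]}
    (hW : W.det * v - 1 ∈ (maximalIdeal R).map C) : IsUnit W.det := by
  have hone : (1 : Matrix ι ι B) ∈ properMatrices R ι B := fun a b => by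
    rw [Matrix.one_apply]
    split_ifs
    exacts [one_mem _, zero_mem _]
  have hdet : algebraMap R[X] B W.det * Di.det = (1 + o).det := by
    rw [← hDi, mulRightLinear_apply, Matrix.det_mul, ← RingHom.mapMatrix_apply, ← RingHom.map_det]
  obtain ⟨g, hg, hWg⟩ := exists_monic_dvd_of_algebraMap_mul hdet
    (det_mem_properFractions (add_mem hone ho)) (det_one_add_sub_one_mem hom)
  exact isUnit_of_dvd_monic hg hWg hW

end UnitDeterminant

section CoordinateProjections

theorem exists_perm_mem_iff {ι : Type*} [Finite ι] {T T' : Finset ι} (h : T.card = T'.card) :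
    ∃ σ : Equiv.Perm ι, ∀ i, σ i ∈ T' ↔ i ∈ T := by
  classical
  let e : {x // x ∈ T} ≃ {x // x ∈ T'} := Fintype.equivOfCardEq (by simpa using h)
  refine ⟨e.extendSubtype, fun i => ⟨fun hi => ?_, fun hi => e.extendSubtype_mem i hi⟩⟩
  by_contra hi'
  exact e.extendSubtype_not_mem i hi' hi

variable {ι : Type*} [DecidableEq ι] [Fintype ι]

theorem ConjMod.coordProj_of_card_eq {A : Type*} [CommRing A] (p : A) {T T' : Finset ι}
    (h : T.card = T'.card) : ConjMod p (coordProj A T) (coordProj A T') := by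
  obtain ⟨σ, hσ⟩ := exists_perm_mem_iff h.symm
  refine ⟨σ.permMatrix A, ?_, MatModEq.of_eq ?_⟩
  · rw [Matrix.det_permutation]
    exact (Equiv.Perm.sign σ).isUnit.map (Int.castRingHom A)
  · ext i j
    rw [mul_coordProj_apply, coordProj_mul_apply]
    simp only [Equiv.Perm.permMatrix, PEquiv.toMatrix_apply, Equiv.toPEquiv_apply]
    by_cases hij : σ i = j <;> simp [hij, ← hσ]

variable {L : Type*} [Field L]

theorem rank_coordProj (T : Finset ι) : (coordProj L T).rank = T.card := by
  classical
  simp [coordProj, Matrix.rank_diagonal]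

theorem ConjMod.card_eq {T T' : Finset ι} (h : ConjMod 0 (coordProj L T) (coordProj L T')) :
    T.card = T'.card := by
  obtain ⟨W, hW, h⟩ := h
  have hrank := congrArg Matrix.rank (Intertwines.zero_iff.1 h)
  rwa [Matrix.rank_mul_eq_right_of_isUnit_det _ _ hW, Matrix.rank_mul_eq_left_of_isUnit_det _ _ hW,
    rank_coordProj, rank_coordProj] at hrank

end CoordinateProjections

section Idempotents

theorem exists_basis_idempotent_apply {ι S M : Type*} [Finite ι] [CommRing S] [IsDomain S]
    [IsPrincipalIdealRing S] [AddCommGroup M] [Module S M] (v : Module.Basis ι S M)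
    {f : Module.End S M} (hf : IsIdempotentElem f) :
    ∃ (b : Module.Basis ι S M) (T : Set ι), (∀ i ∈ T, f (b i) = b i) ∧ ∀ i ∉ T, f (b i) = 0 := by
  have := Module.Free.of_basis v
  have := Module.Finite.of_basis v
  let b₁ := Module.Free.chooseBasis S (LinearMap.range f)
  let b₂ := Module.Free.chooseBasis S (LinearMap.ker f)
  let b₀ := (b₁.prod b₂).map
    (Submodule.prodEquivOfIsCompl _ _ (LinearMap.IsIdempotentElem.isCompl hf))
  let σ := b₀.indexEquiv v
  refine ⟨b₀.reindex σ, {i | (σ.symm i).isLeft}, fun i hi => ?_, fun i hi => ?_⟩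
  · obtain ⟨j, hj⟩ := Sum.isLeft_iff.1 hi
    have hb : b₀ (.inl j) = b₁ j := by simp [b₀]
    rw [Module.Basis.reindex_apply, hj, hb]
    exact (LinearMap.IsIdempotentElem.mem_range_iff hf).1 (b₁ j).2
  · obtain ⟨j, hj⟩ := Sum.isRight_iff.1 (Sum.not_isLeft.1 hi)
    have hb : b₀ (.inr j) = b₂ j := by simp [b₀]
    rw [Module.Basis.reindex_apply, hj, hb]
    exact (b₂ j).2

variable {ι S : Type*} [DecidableEq ι] [Fintype ι] [CommRing S]

theorem conjMod_zero_coordProj_of_basis {e : Matrix ι ι S} {b : Module.Basis ι S (ι → S)}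
    {T : Finset ι} (hT₁ : ∀ i ∈ T, e.toLin' (b i) = b i) (hT₀ : ∀ i ∉ T, e.toLin' (b i) = 0) :
    ConjMod 0 e (coordProj S T) := by
  have he : LinearMap.toMatrix (Pi.basisFun S ι) (Pi.basisFun S ι) e.toLin' = e := by
    rw [LinearMap.toMatrix_eq_toMatrix', LinearMap.toMatrix'_toLin']
  have hT : LinearMap.toMatrix b b e.toLin' = coordProj S T := by
    ext i j
    rw [LinearMap.toMatrix_apply, coordProj, Matrix.diagonal_apply]
    by_cases hj : j ∈ T
    · rw [hT₁ j hj, b.repr_self, Finsupp.single_apply]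
      by_cases hij : i = j <;> simp_all [eq_comm]
    · rw [hT₀ j hj, map_zero]
      by_cases hij : i = j <;> simp_all
  refine ⟨b.toMatrix (Pi.basisFun S ι), ?_, Intertwines.zero_iff.2 ?_⟩
  · exact (Matrix.isUnit_iff_isUnit_det _).1
      (@isUnit_of_invertible _ _ _ (b.invertibleToMatrix (Pi.basisFun S ι)))
  · nth_rw 1 [← he]
    rw [basis_toMatrix_mul_linearMap_toMatrix, ← hT, linearMap_toMatrix_mul_basis_toMatrix]

theorem diagonalizable_zero_of_isPrincipalIdealRing [IsDomain S] [IsPrincipalIdealRing S]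
    {e : Matrix ι ι S} (he : e * e = e) : Diagonalizable 0 e := by
  have hf : IsIdempotentElem e.toLin' := by
    rw [IsIdempotentElem, Module.End.mul_eq_comp, ← Matrix.toLin'_mul, he]
  obtain ⟨b, T, hT₁, hT₀⟩ := exists_basis_idempotent_apply (Pi.basisFun S ι) hf
  classical
  exact ⟨T.toFinset, conjMod_zero_coordProj_of_basis (b := b) (by simpa using hT₁)
    (by simpa using hT₀)⟩

theorem conjMod_zero_coordProj_of_map [IsDomain S] [IsPrincipalIdealRing S] {L : Type*} [Field L]
    (φ : S →+* L) {e : Matrix ι ι S} (he : e * e = e) {T : Finset ι}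
    (hT : ConjMod 0 (e.map φ) (coordProj L T)) : ConjMod 0 e (coordProj S T) := by
  obtain ⟨T', hT'⟩ := diagonalizable_zero_of_isPrincipalIdealRing he
  have hmap := hT'.map φ
  rw [map_zero, coordProj_map] at hmap
  exact hT'.trans (.coordProj_of_card_eq 0 (hmap.symm.trans hT).card_eq)

end Idempotents

section Lifting

variable {ι : Type*} [Fintype ι]

theorem exists_intertwines_map_eq {S S' : Type*} [CommRing S] [CommRing S'] {π : S →+* S'}
    (hπ : Function.Surjective π) {p : S} {e f : Matrix ι ι S} (he : MatModEq p (e * e) e)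
    (hf : MatModEq p (f * f) f) (hπe : (e * e).map π = e.map π) {P : Matrix ι ι S'}
    (hP : P * e.map π = f.map π * P) :
    ∃ Q : Matrix ι ι S, Intertwines p Q e f ∧ Q.map π = P := by
  classical
  choose lift hlift using hπ
  let Q := P.map lift
  have hQ : π.mapMatrix Q = P := by
    ext i j
    simp [Q, hlift]
  refine ⟨f * Q * e + (1 - f) * Q * (1 - e), ?_, ?_⟩
  · calc
      MatModEq p _ (f * Q * (e * e) + (1 - f) * Q * (e - e * e)) :=
        .of_eq (by noncomm_ring)
      MatModEq p _ (f * Q * e + (1 - f) * Q * (e - e)) :=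
        (he.mul_left _).add (((MatModEq.refl e).sub he).mul_left _)
      MatModEq p _ (f * (Q * e) + (f - f) * (Q * (1 - e))) := .of_eq (by noncomm_ring)
      MatModEq p _ (f * f * (Q * e) + (f - f * f) * (Q * (1 - e))) :=
        (hf.symm.mul_right _).add (((MatModEq.refl f).sub hf.symm).mul_right _)
      MatModEq p _ _ := .of_eq (by noncomm_ring)
  · simp only [← RingHom.mapMatrix_apply] at hP hπe ⊢
    simp only [map_add, map_mul, map_sub, map_one, hQ] at hπe ⊢
    rw [← hP, Matrix.mul_assoc P, hπe, sub_mul, one_mul, ← hP]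
    simp only [sub_mul, mul_sub, mul_one, Matrix.mul_assoc, hπe]
    abel

variable [DecidableEq ι] {S L : Type*} [CommRing S] [Field L] {ψ : S →+* L}

theorem exists_isUnit_det_map_eq (hψ : ∀ x : L, x ≠ 0 → ∃ u, IsUnit u ∧ ψ u = x)
    {g : Matrix ι ι L} (hg : IsUnit g.det) : ∃ G : Matrix ι ι S, IsUnit G.det ∧ G.map ψ = g := by
  refine Matrix.diagonal_transvection_induction_of_det_ne_zero
    (fun g => ∃ G : Matrix ι ι S, IsUnit G.det ∧ G.map ψ = g) g hg.ne_zero ?diag ?transv ?mul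
  case diag =>
    intro D hD
    rw [Matrix.det_diagonal, Finset.prod_ne_zero_iff] at hD
    choose u hu hψu using fun i => hψ (D i) (hD i (Finset.mem_univ i))
    refine ⟨Matrix.diagonal u, ?_, ?_⟩
    · rw [Matrix.det_diagonal]
      exact IsUnit.prod_univ_iff.2 hu
    · rw [Matrix.diagonal_map (map_zero ψ)]
      exact congrArg Matrix.diagonal (funext hψu)
  case transv =>
    intro t
    obtain ⟨c, hc⟩ : ∃ c, ψ c = t.c := by
      by_cases hx : t.c = 0
      · exact ⟨0, by rw [hx, map_zero]⟩
      · exact (hψ _ hx).imp fun _ h => h.2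
    refine ⟨Matrix.transvection t.i t.j c, ?_, ?_⟩
    · rw [Matrix.det_transvection_of_ne _ _ t.hij]
      exact isUnit_one
    · rw [Matrix.TransvectionStruct.toMatrix, Matrix.transvection, Matrix.transvection,
        Matrix.map_add _ (map_add ψ), Matrix.map_single, hc,
        Matrix.map_one _ (map_zero ψ) (map_one ψ)]
  case mul =>
    rintro _ _ - - ⟨G, hG, rfl⟩ ⟨G', hG', rfl⟩
    exact ⟨G * G', isUnit_det_mul hG hG', Matrix.map_mul⟩

theorem exists_isUnit_det_commute_coordProj_map_eq
    (hψ : ∀ x : L, x ≠ 0 → ∃ u, IsUnit u ∧ ψ u = x) {T : Finset ι} {g : Matrix ι ι L}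
    (hg : IsUnit g.det) (hgT : Intertwines 0 g (coordProj L T) (coordProj L T)) (p : S) :
    ∃ G : Matrix ι ι S, IsUnit G.det ∧ G.map ψ = g ∧
      Intertwines p G (coordProj S T) (coordProj S T) := by
  rw [intertwines_coordProj_iff] at hgT
  let σ := Equiv.sumCompl (· ∈ T)
  let g' := g.submatrix σ σ
  have hg' : g' = Matrix.fromBlocks g'.toBlocks₁₁ 0 0 g'.toBlocks₂₂ := by
    conv_lhs => rw [← Matrix.fromBlocks_toBlocks g']
    congr 1 <;> ext ⟨i, hi⟩ ⟨j, hj⟩ <;> exact zero_dvd_iff.1 (hgT i j (by simp [hi, hj]))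
  have hdet : IsUnit g'.det := by rwa [Matrix.det_submatrix_equiv_self]
  rw [hg', Matrix.det_fromBlocks_zero₂₁, IsUnit.mul_iff] at hdet
  obtain ⟨G₁, hG₁, h₁⟩ := exists_isUnit_det_map_eq hψ hdet.1
  obtain ⟨G₂, hG₂, h₂⟩ := exists_isUnit_det_map_eq hψ hdet.2
  refine ⟨(Matrix.fromBlocks G₁ 0 0 G₂).submatrix σ.symm σ.symm, ?_, ?_, ?_⟩
  · rw [Matrix.det_submatrix_equiv_self, Matrix.det_fromBlocks_zero₂₁]
    exact hG₁.mul hG₂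
  · rw [← Matrix.submatrix_map, Matrix.fromBlocks_map, h₁, h₂, Matrix.map_zero _ (map_zero ψ),
      Matrix.map_zero _ (map_zero ψ), ← hg']
    simp [g']
  · refine intertwines_coordProj_iff.2 fun i j hij => ?_
    by_cases hi : i ∈ T <;> by_cases hj : j ∈ T
    · simp [hi, hj] at hij
    · simp [σ, hi, hj]
    · simp [σ, hi, hj]
    · simp [hi, hj] at hij

end Lifting

section LocalStep

open IsLocalRing (maximalIdeal residue ResidueField)

variable {R : Type*} [CommRing R] [IsLocalRing R]

theorem mem_map_C_maximalIdeal_iff {g : R[X]} :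
    g ∈ (maximalIdeal R).map C ↔ mapRingHom (residue R) g = 0 :=
  mem_map_C_iff_map_mk_eq_zero

theorem exists_map_residue_eq_isUnit_leadingCoeff {g : (ResidueField R)[X]} (hg : g ≠ 0) :
    ∃ f : R[X], f.map (residue R) = g ∧ IsUnit f.leadingCoeff := by
  obtain ⟨f, rfl, hdeg⟩ := exists_degree_eq_of_mem_lifts
    (mem_lifts_of_surjective IsLocalRing.residue_surjective g)
  refine ⟨f, rfl, ?_⟩
  rw [← IsLocalRing.residue_ne_zero_iff_isUnit, leadingCoeff, natDegree_eq_of_degree_eq hdeg,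
    ← coeff_map, coeff_natDegree]
  exact leadingCoeff_ne_zero.2 hg

variable (B : Type*) [CommRing B] [Algebra R[X] B] [IsLocalization (monicSubmonoid R) B]

variable (R) in
/-- Reduction modulo the maximal ideal, from fractions with monic denominator to rational functions
over the residue field. -/
noncomputable def residueLift : B →+* FractionRing (ResidueField R)[X] :=
  IsLocalization.lift (M := monicSubmonoid R)
    (g := (algebraMap (ResidueField R)[X] (FractionRing _)).comp (mapRingHom (residue R)))
    fun f => by
      rw [isUnit_iff_ne_zero, RingHom.comp_apply, Ne, FaithfulSMul.algebraMap_eq_zero_iff,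
        coe_mapRingHom]
      exact (Monic.map _ f.2).ne_zero

theorem residueLift_algebraMap (f : R[X]) : residueLift R B (algebraMap R[X] B f) =
    algebraMap _ _ (mapRingHom (residue R) f) := by
  rw [residueLift, IsLocalization.lift_eq, RingHom.comp_apply]

variable {B}

theorem exists_isUnit_residueLift_eq_algebraMap {g : (ResidueField R)[X]} (hg : g ≠ 0) :
    ∃ u : B, IsUnit u ∧ residueLift R B u = algebraMap _ _ g := by
  obtain ⟨f, rfl, hf⟩ := exists_map_residue_eq_isUnit_leadingCoeff hg
  exact ⟨algebraMap R[X] B f, isUnit_algebraMap_of_isUnit_leadingCoeff hf,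
    residueLift_algebraMap B f⟩

theorem exists_isUnit_residueLift_eq (x : FractionRing (ResidueField R)[X]) (hx : x ≠ 0) :
    ∃ u : B, IsUnit u ∧ residueLift R B u = x := by
  obtain ⟨a, b, hb, rfl⟩ := IsFractionRing.div_surjective (A := (ResidueField R)[X]) x
  have ha : a ≠ 0 := by
    rintro rfl
    simp at hx
  obtain ⟨u, hu, hua⟩ := exists_isUnit_residueLift_eq_algebraMap (B := B) ha
  obtain ⟨v, hv, hvb⟩ := exists_isUnit_residueLift_eq_algebraMap (B := B)
    (nonZeroDivisors.ne_zero hb)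
  refine ⟨u * hv.unit⁻¹, hu.mul (Units.isUnit _), ?_⟩
  rw [map_mul, hua, div_eq_mul_inv]
  congr 1
  refine eq_inv_of_mul_eq_one_left ?_
  rw [← hvb, ← map_mul, IsUnit.val_inv_mul, map_one]

theorem mem_map_of_residueLift_eq_zero [Algebra R B] [IsScalarTower R R[X] B] {b : B}
    (h : residueLift R B b = 0) : b ∈ (maximalIdeal R).map (algebraMap R B) := by
  obtain ⟨f, g, hf, hfg⟩ := exists_monic_mul_eq (R := R) b
  have hg := congrArg (residueLift R B) hfg
  rw [map_mul, h, mul_zero, residueLift_algebraMap, eq_comm,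
    FaithfulSMul.algebraMap_eq_zero_iff] at hg
  have hmem := Ideal.mem_map_of_mem (algebraMap R[X] B) (mem_map_C_maximalIdeal_iff.2 hg)
  rw [← hfg, Ideal.map_map, ← Polynomial.algebraMap_eq, ← IsScalarTower.algebraMap_eq] at hmem
  exact (Ideal.unit_mul_mem_iff_mem _ (isUnit_algebraMap_of_monic hf)).1 hmem

theorem mapRingHom_residue_C_eq_zero {p : R} (hp : p ∈ maximalIdeal R) :
    mapRingHom (residue R) (C p) = 0 :=
  mem_map_C_maximalIdeal_iff.1 (Ideal.mem_map_of_mem C hp)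

theorem map_algebraMap_map_residueLift {ι : Type*} (X : Matrix ι ι R[X]) :
    (X.map (algebraMap R[X] B)).map (residueLift R B) =
      (X.map (mapRingHom (residue R))).map (algebraMap _ (FractionRing _)) := by
  ext i j
  simp only [Matrix.map_apply, residueLift_algebraMap]

variable {ι : Type*} [DecidableEq ι] [Fintype ι] {p : R} {e : Matrix ι ι R[X]}

variable (B) in
/-- Over the principal ideal domain `(ResidueField R)[X]` the idempotent `e` becomes diagonal; the
diagonalization over `B` is corrected so as to reduce to the one obtained there. -/
theorem exists_intertwines_map_residueLift_eq (hp : p ∈ maximalIdeal R)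
    (he : MatModEq (C p) (e * e) e)
    (hU : Diagonalizable (algebraMap R[X] B (C p)) (e.map (algebraMap R[X] B))) :
    ∃ (T : Finset ι) (D : Matrix ι ι B) (P : Matrix ι ι (ResidueField R)[X]),
      IsUnit D.det ∧
      Intertwines (algebraMap R[X] B (C p)) D (e.map (algebraMap R[X] B)) (coordProj B T) ∧
      IsUnit P.det ∧ Intertwines 0 P (e.map (mapRingHom (residue R))) (coordProj _ T) ∧
      D.map (residueLift R B) = P.map (algebraMap _ _) := by
  obtain ⟨T, U, hU, hUe⟩ := hU
  have hp₀ := mapRingHom_residue_C_eq_zero hp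
  have he₀ : e.map (mapRingHom (residue R)) * e.map (mapRingHom (residue R)) =
      e.map (mapRingHom (residue R)) := by
    rw [← Matrix.map_mul, he.map_eq hp₀]
  let V := U.map (residueLift R B)
  have hV : IsUnit V.det := isUnit_det_map hU _
  have hVe : Intertwines 0 V ((e.map (mapRingHom (residue R))).map (algebraMap _ _))
      (coordProj _ T) := by
    have h := hUe.map (residueLift R B)
    rwa [residueLift_algebraMap, hp₀, map_zero, map_algebraMap_map_residueLift,
      coordProj_map] at h
  obtain ⟨P, hP, hPe⟩ := conjMod_zero_coordProj_of_map (algebraMap _ _) he₀ ⟨V, hV, hVe⟩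
  have hPe' := hPe.map (algebraMap _ (FractionRing (ResidueField R)[X]))
  rw [map_zero, coordProj_map] at hPe'
  obtain ⟨G, hG, hGPV, hGT⟩ := exists_isUnit_det_commute_coordProj_map_eq
    exists_isUnit_residueLift_eq
    (isUnit_det_mul (isUnit_det_map hP _) (Matrix.isUnit_nonsing_inv_det V hV))
    (hPe'.comp (hVe.inv hV)) (algebraMap R[X] B (C p))
  refine ⟨T, G * U, P, isUnit_det_mul hG hU, hGT.comp hUe, hP, hPe, ?_⟩
  rw [Matrix.map_mul, hGPV, Matrix.mul_assoc, Matrix.nonsing_inv_mul V hV, Matrix.mul_one]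

variable [Algebra R B] [IsScalarTower R R[X] B]

theorem mulRightLinear_inv_sub_one_mem_blockMatrices {T : Finset ι} {q : Matrix ι ι R[X]}
    {D : Matrix ι ι B} (hD : IsUnit D.det)
    (hDe : Intertwines (algebraMap R[X] B (C p)) D (e.map (algebraMap R[X] B)) (coordProj B T))
    (hq : Intertwines (C p) q e (coordProj R[X] T))
    (hqD : (q.map (algebraMap R[X] B)).map (residueLift R B) = D.map (residueLift R B)) :
    mulRightLinear D⁻¹ q - 1 ∈ blockMatrices B (maximalIdeal R) p T := by
  constructor
  · have hqT := hq.map (algebraMap R[X] B)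
    rw [coordProj_map] at hqT
    rw [mulRightLinear_apply, IsScalarTower.algebraMap_apply R R[X] B, Polynomial.algebraMap_eq]
    exact (hqT.comp (hDe.inv hD)).sub (Intertwines.one _)
  · refine fun a b => mem_map_of_residueLift_eq_zero ?_
    have h : (residueLift R B).mapMatrix (mulRightLinear D⁻¹ q - 1) = 0 := by
      rw [mulRightLinear_apply, map_sub, map_mul, map_one, RingHom.mapMatrix_apply, hqD,
        ← RingHom.mapMatrix_apply, ← map_mul, Matrix.mul_nonsing_inv D hD, map_one, sub_self]
    exact congrFun (congrFun h a) b

variable (B) in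
/-- Horrocks' theorem for idempotents modulo `p`. -/
theorem diagonalizable_of_monicLocalization [IsNoetherianRing R]
    (hp : p ∈ maximalIdeal R) (he : MatModEq (C p) (e * e) e)
    (hU : Diagonalizable (algebraMap R[X] B (C p)) (e.map (algebraMap R[X] B))) :
    Diagonalizable (C p) e := by
  obtain ⟨T, D, P, hD, hDe, hP, hPe, hDP⟩ := exists_intertwines_map_residueLift_eq B hp he hU
  have hsurj : Function.Surjective (mapRingHom (residue R)) :=
    Polynomial.map_surjective _ IsLocalRing.residue_surjective
  obtain ⟨q, hq, hqP⟩ := exists_intertwines_map_eq hsurj he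
    (MatModEq.of_eq (coordProj_mul_self T)) (he.map_eq (mapRingHom_residue_C_eq_zero hp))
    (P := P) (by rw [coordProj_map]; exact Intertwines.zero_iff.1 hPe)
  have hqD : (q.map (algebraMap R[X] B)).map (residueLift R B) = D.map (residueLift R B) := by
    rw [map_algebraMap_map_residueLift, hqP, hDP]
  obtain ⟨Y, hY, o, ⟨ho, ho'⟩, hqY⟩ := exists_intertwiner_mulRightLinear_eq_add hp hD hDe hq
    (mulRightLinear_inv_sub_one_mem_blockMatrices hD hDe hq hqD)
  have hYP : (q - Y).map (mapRingHom (residue R)) = P := by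
    rw [Matrix.map_sub _ (map_sub _), hqP, sub_eq_self]
    ext1 a b
    exact mem_map_C_maximalIdeal_iff.1 (hY.2 a b)
  obtain ⟨v, hv⟩ := hP.exists_right_inv
  obtain ⟨w, rfl⟩ := hsurj v
  refine ⟨T, q - Y, isUnit_det_of_mulRightLinear_eq_one_add (B := B) (Di := D⁻¹) (v := w) ?_ ho'
    ho.2 ?_, hq.sub hY.1⟩
  · rw [map_sub, hqY, add_sub_cancel_left]
  · rw [mem_map_C_maximalIdeal_iff, map_sub, map_mul, RingHom.map_det, RingHom.mapMatrix_apply,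
      hYP, hv, map_one, sub_self]

end LocalStep

section Patching

section Substitutions

variable {R S : Type*} [CommRing R] [CommRing S]

/-- The substitution `X ↦ a X`, used to clear denominators in all coefficients but the constant
one. -/
noncomputable def scaleHom (a : R) : R[X] →+* R[X] := compRingHom (C a * X)

/-- The substitution `X ↦ X + a Y`, where `Y` is the outer variable of `R[X][X]`. -/
noncomputable def shiftHom (a : R) : R[X] →+* R[X][X] :=
  eval₂RingHom (C.comp C) (C X + C (C a) * X)

theorem scaleHom_comp_C (a : R) : (scaleHom a).comp C = C := by
  ext; simp [scaleHom]

theorem scaleHom_comp_shiftHom (a b : R) :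
    (scaleHom (C b)).comp (shiftHom a) = shiftHom (a * b) := by
  ext <;> simp [scaleHom, shiftHom, mul_assoc]

theorem shiftHom_zero : shiftHom (0 : R) = C := by
  ext <;> simp [shiftHom]

theorem eval₂RingHom_shiftHom_comp_shiftHom (a b : R) :
    (eval₂RingHom (shiftHom a) X).comp (shiftHom b) = shiftHom (a + b) := by
  ext <;> simp [shiftHom, add_mul, add_assoc]

theorem evalRingHom_zero_comp_shiftHom (a : R) : (evalRingHom 0).comp (shiftHom a) = .id R[X] := by
  ext <;> simp [shiftHom]

theorem evalRingHom_neg_X_comp_shiftHom_one :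
    (evalRingHom (-X)).comp (shiftHom (1 : R)) = C.comp (evalRingHom 0) := by
  ext <;> simp [shiftHom]

theorem mapRingHom_comp_shiftHom (φ : R →+* S) (a : R) :
    (mapRingHom (mapRingHom φ)).comp (shiftHom a) = (shiftHom (φ a)).comp (mapRingHom φ) := by
  ext <;> simp [shiftHom]

variable {ι κ : Type*}

theorem map_C_map_eval_zero (W : Matrix ι κ R[X]) : (W.map C).map (evalRingHom 0) = W := by
  ext; simp

theorem map_shiftHom_map_eval_zero (a : R) (W : Matrix ι κ R[X]) :
    (W.map (shiftHom a)).map (evalRingHom 0) = W :=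
  congrArg (fun φ : R[X] →+* R[X] => W.map φ) (evalRingHom_zero_comp_shiftHom a)

theorem map_C_map_scaleHom (φ : R →+* S) (b : S) (e : Matrix ι κ R[X]) :
    ((e.map (mapRingHom φ)).map C).map (scaleHom (C b)) =
      (e.map C).map (mapRingHom (mapRingHom φ)) := by
  have h : ((scaleHom (C b)).comp C).comp (mapRingHom φ) =
      (mapRingHom (mapRingHom φ)).comp C := by
    rw [scaleHom_comp_C]
    ext <;> simp
  exact congrArg (fun f : R[X] →+* S[X][X] => e.map f) h

theorem map_shiftHom_map_scaleHom (φ : R →+* S) (b : R) (e : Matrix ι κ R[X]) :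
    ((e.map (mapRingHom φ)).map (shiftHom 1)).map (scaleHom (C (φ b))) =
      (e.map (shiftHom b)).map (mapRingHom (mapRingHom φ)) := by
  have h : ((scaleHom (C (φ b))).comp (shiftHom 1)).comp (mapRingHom φ) =
      (mapRingHom (mapRingHom φ)).comp (shiftHom b) := by
    rw [scaleHom_comp_shiftHom, one_mul, mapRingHom_comp_shiftHom]
  exact congrArg (fun f : R[X] →+* S[X][X] => e.map f) h

end Substitutions

section ScaledLifts

variable {R Rm : Type*} [CommRing R] [CommRing Rm] [Algebra R Rm] (M : Submonoid R)
  [IsLocalization M Rm]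

theorem exists_forall_scaleHom_mem_range {σ : Type*} [Finite σ] {F : σ → Rm[X]}
    (hF : ∀ k, (F k).coeff 0 ∈ (algebraMap R Rm).range) :
    ∃ b ∈ M, ∀ k, scaleHom (algebraMap R Rm b) (F k) ∈ (mapRingHom (algebraMap R Rm)).range := by
  classical
  have := Fintype.ofFinite σ
  obtain ⟨⟨b, hb⟩, h⟩ := IsLocalization.exist_integer_multiples_of_finset M
    (Finset.univ.biUnion fun k => (F k).support.image fun i => (F k).coeff i)
  refine ⟨b, hb, fun k => (lifts_iff_coeff_lifts _).2 fun i => ?_⟩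
  rw [scaleHom, coe_compRingHom_apply, comp_C_mul_X_coeff]
  rcases i with _ | i
  · simpa using hF k
  by_cases hi : (F k).coeff (i + 1) = 0
  · exact ⟨0, by simp [hi]⟩
  obtain ⟨g, hg⟩ := h ((F k).coeff (i + 1)) (Finset.mem_biUnion.2 ⟨k, Finset.mem_univ k,
    Finset.mem_image_of_mem _ (mem_support_iff.2 hi)⟩)
  refine ⟨b ^ i * g, ?_⟩
  rw [map_mul, hg, map_pow, Algebra.smul_def]
  ring

theorem exists_forall_map_eq_map_scaleHom {σ ι κ : Type*} [Finite σ] [Finite ι] [Finite κ]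
    {F : σ → Matrix ι κ Rm[X][X]} (hF : ∀ k, ∃ N : Matrix ι κ R[X],
      N.map (mapRingHom (algebraMap R Rm)) = (F k).map (evalRingHom 0)) :
    ∃ b ∈ M, ∀ k, ∃ G : Matrix ι κ R[X][X],
      G.map (mapRingHom (mapRingHom (algebraMap R Rm))) =
        (F k).map (scaleHom (C (algebraMap R Rm b))) := by
  let _ : Algebra R[X] Rm[X] := (mapRingHom (algebraMap R Rm)).toAlgebra
  have : IsLocalization (M.map C) Rm[X] := Polynomial.isLocalization M Rm
  obtain ⟨_, ⟨b, hb, rfl⟩, h⟩ := exists_forall_scaleHom_mem_range (M.map (C : R →+* R[X]))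
    (F := fun k : σ × ι × κ => F k.1 k.2.1 k.2.2) (by
      rintro ⟨k, i, j⟩
      obtain ⟨N, hN⟩ := hF k
      refine ⟨N i j, ?_⟩
      rw [coeff_zero_eq_eval_zero]
      exact congrFun (congrFun hN i) j)
  choose G hG using h
  have hC : algebraMap R[X] Rm[X] (C b) = C (algebraMap R Rm b) := map_C _
  rw [hC] at hG
  exact ⟨b, hb, fun k => ⟨Matrix.of fun i j => G (k, i, j), Matrix.ext fun i j => hG (k, i, j)⟩⟩

end ScaledLifts

section Ideal

variable {R ι κ : Type*} [CommRing R]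

theorem C_dvd_exists_eval_zero {p : R} {f : R[X]} (hf : C p ∣ f) (hf₀ : f.eval 0 = 0) :
    ∃ g : R[X], f = C p * g ∧ g.eval 0 = 0 := by
  obtain ⟨g, rfl⟩ := hf
  rw [eval_mul, eval_C] at hf₀
  refine ⟨g - C (g.eval 0), ?_, by simp⟩
  rw [mul_sub, ← C_mul, hf₀, C_0, sub_zero]

theorem MatModEq.exists_add_smul_of_map_eval_zero_eq {p : R} {X Y : Matrix ι κ R[X]}
    (h : MatModEq (C p) X Y) (h₀ : X.map (evalRingHom 0) = Y.map (evalRingHom 0)) :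
    ∃ Z : Matrix ι κ R[X], X = Y + C p • Z ∧ Z.map (evalRingHom 0) = 0 := by
  have h₀' (i j) : (X i j - Y i j).eval 0 = 0 := by
    rw [eval_sub, sub_eq_zero]
    exact congrFun (congrFun h₀ i) j
  choose Z hZ hZ₀ using fun i j => C_dvd_exists_eval_zero (h i j) (h₀' i j)
  exact ⟨Matrix.of Z, by ext1 i j; simp [← hZ], Matrix.ext hZ₀⟩

variable [Fintype ι] [DecidableEq ι]

/-- Quillen's patching ideal: those `a` for which `e(X)` and `e(X + a Y)` are conjugate modulo
`p`. -/
def patchingIdeal (p : R) (e : Matrix ι ι R[X]) : Ideal R where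
  carrier := {a | ConjMod (C (C p)) (e.map C) (e.map (shiftHom a))}
  zero_mem' := by
    rw [Set.mem_ofPred_eq, shiftHom_zero]
    exact .refl _
  add_mem' {a b} ha hb := by
    have h := ConjMod.map_comp hb (eval₂RingHom (shiftHom a) X)
    have hC : (eval₂RingHom (shiftHom a) X).comp C = shiftHom a := by ext <;> simp
    have hp : eval₂RingHom (shiftHom a) X (C (C p)) = C (C p) := by simp [shiftHom]
    rw [eval₂RingHom_shiftHom_comp_shiftHom, hC, hp] at h
    exact ConjMod.trans ha h
  smul_mem' r a ha := by
    have h := ConjMod.map_comp ha (scaleHom (C r))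
    have hp : scaleHom (C r) (C (C p)) = C (C p) := by simp [scaleHom]
    rw [scaleHom_comp_shiftHom, scaleHom_comp_C, hp, mul_comm] at h
    exact h

theorem conjMod_eval_zero_of_one_mem_patchingIdeal {p : R} {e : Matrix ι ι R[X]}
    (h : 1 ∈ patchingIdeal p e) : ConjMod (C p) e ((e.map (evalRingHom 0)).map C) := by
  have h' := ConjMod.map_comp h (evalRingHom (-X))
  have hC : e.map ((evalRingHom (-X)).comp C) = e := by ext; simp
  have hp : evalRingHom (-X) (C (C p)) = C p := by simp
  rw [evalRingHom_neg_X_comp_shiftHom_one, hC, hp] at h'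
  exact h'

/-- With `W` diagonalizing `e`, take `Θ = W(X)⁻¹ W(X + Y)`. -/
theorem Diagonalizable.exists_intertwines_shiftHom {p : R} {e : Matrix ι ι R[X]}
    (h : Diagonalizable (C p) e) : ∃ Θ : Matrix ι ι R[X][X], IsUnit Θ.det ∧
      Intertwines (C (C p)) Θ (e.map (shiftHom 1)) (e.map C) ∧ Θ.map (evalRingHom 0) = 1 := by
  obtain ⟨T, W, hW, hWe⟩ := h
  have hWC : IsUnit (W.map (C : R[X] →+* R[X][X])).det := isUnit_det_map hW C
  have hC := hWe.map (C : R[X] →+* R[X][X])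
  have hshift := hWe.map (shiftHom 1)
  have hp : shiftHom 1 (C p) = C (C p) := by simp [shiftHom]
  rw [coordProj_map] at hC hshift
  rw [hp] at hshift
  refine ⟨(W.map C)⁻¹ * W.map (shiftHom 1), ?_, (hC.inv hWC).comp hshift, ?_⟩
  · exact isUnit_det_mul (Matrix.isUnit_nonsing_inv_det _ hWC) (isUnit_det_map hW _)
  · have hinv := congrArg (·.map (evalRingHom 0)) (Matrix.nonsing_inv_mul _ hWC)
    simp only [Matrix.map_mul, map_C_map_eval_zero] at hinv
    rw [Matrix.map_mul, map_shiftHom_map_eval_zero, hinv,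
      Matrix.map_one _ (map_zero _) (map_one _)]

theorem isUnit_det_of_mul_eq_one_of_map {S : Type*} [CommRing S] {J : R →+* S}
    (hJ : Function.Injective J) {L L' : Matrix ι ι R} (h : L.map J * L'.map J = 1) :
    IsUnit L.det := by
  refine (Matrix.isUnit_iff_isUnit_det L).1 (IsUnit.of_mul_eq_one L' ?_)
  refine Matrix.map_injective hJ ?_
  dsimp only
  rw [Matrix.map_mul, h, Matrix.map_one _ (map_zero J) (map_one J)]

theorem exists_mem_patchingIdeal {M : Submonoid R} (hM : M ≤ nonZeroDivisors R) (Rm : Type*)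
    [CommRing Rm] [Algebra R Rm] [IsLocalization M Rm] {p : R} {e : Matrix ι ι R[X]}
    (h : Diagonalizable (C (algebraMap R Rm p)) (e.map (mapRingHom (algebraMap R Rm)))) :
    ∃ b ∈ M, b ∈ patchingIdeal p e := by
  obtain ⟨Θ, hΘ, hΘe, hΘ₀⟩ := h.exists_intertwines_shiftHom
  have hΘinv₀ : Θ⁻¹.map (evalRingHom 0) = 1 := by
    have hinv := congrArg (·.map (evalRingHom 0)) (Matrix.nonsing_inv_mul _ hΘ)
    simpa only [Matrix.map_mul, hΘ₀, Matrix.mul_one,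
      Matrix.map_one _ (map_zero (evalRingHom _)) (map_one (evalRingHom _))] using hinv
  obtain ⟨Ψ, hΨ, hΨ₀⟩ := hΘe.exists_add_smul_of_map_eval_zero_eq (by
    rw [Matrix.map_mul, Matrix.map_mul, hΘ₀, Matrix.one_mul, Matrix.mul_one]
    rw [map_shiftHom_map_eval_zero, map_C_map_eval_zero])
  set J := mapRingHom (mapRingHom (algebraMap R Rm)) with hJdef
  have hJ : Function.Injective J :=
    map_injective _ (map_injective _ (IsLocalization.injective Rm hM))
  obtain ⟨b, hb, hlift⟩ := exists_forall_map_eq_map_scaleHom M (F := ![Θ, Θ⁻¹, Ψ]) (by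
    have hone := Matrix.map_one (n := ι) (mapRingHom (algebraMap R Rm)) (map_zero _) (map_one _)
    intro k
    fin_cases k
    exacts [⟨1, hone.trans hΘ₀.symm⟩, ⟨1, hone.trans hΘinv₀.symm⟩,
      ⟨0, (Matrix.map_zero _ (map_zero _)).trans hΨ₀.symm⟩])
  obtain ⟨L, hL : L.map J = Θ.map _⟩ := hlift 0
  obtain ⟨L', hL' : L'.map J = Θ⁻¹.map _⟩ := hlift 1
  obtain ⟨Z, hZ : Z.map J = Ψ.map _⟩ := hlift 2
  refine ⟨b, hb, ConjMod.symm ⟨L, isUnit_det_of_mul_eq_one_of_map hJ (L' := L') ?_,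
    MatModEq.iff_exists_add_smul.2 ⟨Z, Matrix.map_injective hJ ?_⟩⟩⟩
  · rw [hL, hL', ← Matrix.map_mul, Matrix.mul_nonsing_inv Θ hΘ,
      Matrix.map_one _ (map_zero _) (map_one _)]
  · have h := congrArg (·.map (scaleHom (C (algebraMap R Rm b)))) hΨ
    have hp : J (C (C p)) = scaleHom (C (algebraMap R Rm b)) (C (C (algebraMap R Rm p))) := by
      simp [hJdef, scaleHom]
    simp only [Matrix.map_mul, Matrix.map_add _ (map_add _), map_C_map_scaleHom,
      map_shiftHom_map_scaleHom, Matrix.map_smul' _ _ _ (map_mul _)] at h ⊢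
    rw [hL, hZ, hp, h]

/-- Quillen's patching theorem for idempotents modulo `p`. -/
theorem conjMod_eval_zero_of_forall_isMaximal [IsDomain R] {p : R} {e : Matrix ι ι R[X]}
    (h : ∀ (m : Ideal R) [m.IsMaximal], Diagonalizable (C (algebraMap R (Localization.AtPrime m) p))
      (e.map (mapRingHom (algebraMap R (Localization.AtPrime m))))) :
    ConjMod (C p) e ((e.map (evalRingHom 0)).map C) := by
  have htop : patchingIdeal p e = ⊤ := by
    by_contra hne
    obtain ⟨m, hm, hle⟩ := Ideal.exists_le_maximal _ hne
    obtain ⟨b, hb, hb'⟩ := exists_mem_patchingIdeal m.primeCompl_le_nonZeroDivisors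
      (Localization.AtPrime m) (h m)
    exact hb (hle hb')
  exact conjMod_eval_zero_of_one_mem_patchingIdeal (htop ▸ Submodule.mem_top)

end Ideal

end Patching

section ResidueField

variable {A ι : Type*} [CommRing A] [DecidableEq ι]

theorem diagonal_inv_mul_transvection_mul_diagonal {L : Type*} [Field L] [Fintype ι] {d : ι → L}
    (hd : ∀ i, d i ≠ 0) {i j : ι} (c : L) :
    Matrix.diagonal d⁻¹ * Matrix.transvection i j c * Matrix.diagonal d =
      Matrix.transvection i j ((d i)⁻¹ * c * d j) := by
  ext a b
  rw [Matrix.mul_diagonal, Matrix.diagonal_mul]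
  simp only [Matrix.transvection, Matrix.add_apply, Matrix.one_apply, Matrix.single_apply,
    Pi.inv_apply]
  have := hd a
  split_ifs <;> grind

theorem transvection_map {B : Type*} [CommRing B] (f : A →+* B) (i j : ι) (c : A) :
    (Matrix.transvection i j c).map f = Matrix.transvection i j (f c) := by
  rw [Matrix.transvection, Matrix.transvection, Matrix.map_add _ (map_add f), Matrix.map_single,
    Matrix.map_one _ (map_zero f) (map_one f)]

variable [Fintype ι]

theorem diagonal_inv_mul_diagonal {L : Type*} [Field L] {d : ι → L} (hd : ∀ i, d i ≠ 0) :
    Matrix.diagonal d⁻¹ * Matrix.diagonal d = 1 := by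
  rw [Matrix.diagonal_mul_diagonal, ← Matrix.diagonal_one]
  exact congrArg Matrix.diagonal (funext fun i => inv_mul_cancel₀ (hd i))

/-- Diagonal matrices normalize the transvections, which all lift along `ψ`; so the diagonal factors
of `g` can be collected on the left. The matrix `d` serves the induction on `g`. -/
theorem exists_map_eq_diagonal_mul_mul_diagonal {L : Type*} [Field L] {ψ : A →+* L}
    (hψ : Function.Surjective ψ) {g : Matrix ι ι L} (hg : IsUnit g.det) :
    ∀ d : ι → L, (∀ i, d i ≠ 0) → ∃ (d' : ι → L) (G : Matrix ι ι A), (∀ i, d' i ≠ 0) ∧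
      IsUnit G.det ∧ G.map ψ = Matrix.diagonal d' * g * Matrix.diagonal d := by
  refine Matrix.diagonal_transvection_induction_of_det_ne_zero
    (fun g => ∀ d : ι → L, (∀ i, d i ≠ 0) → ∃ (d' : ι → L) (G : Matrix ι ι A), (∀ i, d' i ≠ 0) ∧
      IsUnit G.det ∧ G.map ψ = Matrix.diagonal d' * g * Matrix.diagonal d) g hg.ne_zero
    ?diag ?transv ?mul
  case diag =>
    intro D hD d hd
    rw [Matrix.det_diagonal, Finset.prod_ne_zero_iff] at hD
    have hDd (i) : (D * d) i ≠ 0 := mul_ne_zero (hD i (Finset.mem_univ i)) (hd i)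
    refine ⟨(D * d)⁻¹, 1, fun i => inv_ne_zero (hDd i), by simp, ?_⟩
    rw [Matrix.map_one _ (map_zero ψ) (map_one ψ), Matrix.mul_assoc, Matrix.diagonal_mul_diagonal]
    exact (diagonal_inv_mul_diagonal hDd).symm
  case transv =>
    intro t d hd
    obtain ⟨c, hc⟩ := hψ ((d t.i)⁻¹ * t.c * d t.j)
    refine ⟨d⁻¹, Matrix.transvection t.i t.j c, fun i => inv_ne_zero (hd i), ?_, ?_⟩
    · rw [Matrix.det_transvection_of_ne _ _ t.hij]
      exact isUnit_one
    · rw [Matrix.TransvectionStruct.toMatrix, diagonal_inv_mul_transvection_mul_diagonal hd,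
        transvection_map, hc]
  case mul =>
    intro g₁ g₂ _ _ h₁ h₂ d hd
    obtain ⟨d₂, G₂, hd₂, hG₂, h₂⟩ := h₂ d hd
    obtain ⟨d₁, G₁, hd₁, hG₁, h₁⟩ := h₁ d₂⁻¹ fun i => inv_ne_zero (hd₂ i)
    refine ⟨d₁, G₁ * G₂, hd₁, isUnit_det_mul hG₁ hG₂, ?_⟩
    calc
      (G₁ * G₂).map ψ = Matrix.diagonal d₁ * g₁ * (Matrix.diagonal d₂⁻¹ * Matrix.diagonal d₂) *
          g₂ * Matrix.diagonal d := by rw [Matrix.map_mul, h₁, h₂]; simp only [Matrix.mul_assoc]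
      _ = Matrix.diagonal d₁ * (g₁ * g₂) * Matrix.diagonal d := by
        rw [diagonal_inv_mul_diagonal hd₂, Matrix.mul_one, Matrix.mul_assoc (Matrix.diagonal d₁)]

theorem diagonalizable_of_isMaximal {p : A} (hp : (Ideal.span {p}).IsMaximal)
    {e : Matrix ι ι A} (he : MatModEq p (e * e) e) : Diagonalizable p e := by
  let _ : Field (A ⧸ Ideal.span {p}) := Ideal.Quotient.field _
  have he' := MatModEq.iff_map_mk.1 he
  rw [Matrix.map_mul] at he'
  obtain ⟨T, g, hg, hge⟩ := diagonalizable_zero_of_isPrincipalIdealRing he'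
  obtain ⟨d, W, -, hW, hWg⟩ := exists_map_eq_diagonal_mul_mul_diagonal
    Ideal.Quotient.mk_surjective hg 1 fun _ => one_ne_zero
  rw [Matrix.diagonal_one', Matrix.mul_one] at hWg
  have hd : Intertwines 0 (Matrix.diagonal d) (coordProj _ T) (coordProj _ T) :=
    Intertwines.zero_iff.2 (Matrix.commute_diagonal _ _).eq
  refine ⟨T, W, hW, MatModEq.iff_map_mk.2 ?_⟩
  rw [Matrix.map_mul, Matrix.map_mul, coordProj_map, hWg]
  exact Intertwines.zero_iff.1 (hd.comp hge)

end ResidueField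

section PolynomialRings

variable {K : Type*} [Field K]

theorem isPrimitive_map_C {p : K[X]} (hp : p ≠ 0) : (p.map (C : K →+* K[X])).IsPrimitive := by
  intro r hr
  have h := (C_dvd_iff_dvd_coeff _ _).1 hr p.natDegree
  rw [coeff_map, coeff_natDegree] at h
  exact isUnit_of_dvd_unit h
    (isUnit_C.2 (isUnit_iff_ne_zero.2 (leadingCoeff_ne_zero.2 hp)))

theorem irreducible_map_fractionRing {p : K[X]} (hp : Irreducible p) :
    Irreducible (p.map ((algebraMap K[X] (FractionRing K[X])).comp C)) := by
  rw [← Polynomial.map_map]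
  refine (isPrimitive_map_C hp.ne_zero).irreducible_iff_irreducible_map_fraction_map.1 ?_
  rw [← Bivariate.swap_C]
  exact (MulEquiv.irreducible_iff Bivariate.swap).2 (prime_C_iff.2 hp.prime).irreducible

/-- Once the monic polynomials in the last variable `y` are inverted, the coefficients may be taken
in `K(y)`, and `y` no longer counts as a variable. -/
theorem exists_comp_eq_algebraMap_comp_mapRingHom (n : ℕ) {S : Type*} [CommRing S] [IsLocalRing S]
    (φ : MvPolynomial (Fin n) K[X] →+* S) (B : Type*) [CommRing B] [Algebra S[X] B]
    [IsLocalization (monicSubmonoid S) B] :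
    ∃ (τ : (MvPolynomial (Fin n) K[X])[X] →+* MvPolynomial (Fin n) (FractionRing K[X])[X])
      (Φ : MvPolynomial (Fin n) (FractionRing K[X])[X] →+* B),
      (∀ q : K[X], τ (C (MvPolynomial.C q)) =
        MvPolynomial.C (q.map ((algebraMap K[X] (FractionRing K[X])).comp C))) ∧
      Φ.comp τ = (algebraMap S[X] B).comp (mapRingHom φ) := by
  let κ : K →+* FractionRing K[X] := (algebraMap K[X] (FractionRing K[X])).comp C
  let g : K[X] →+* B := (algebraMap S[X] B).comp (mapRingHom ((φ.comp MvPolynomial.C).comp C))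
  have hg (y : nonZeroDivisors K[X]) : IsUnit (g y) := by
    refine isUnit_algebraMap_of_isUnit_leadingCoeff ?_
    rw [coe_mapRingHom, leadingCoeff_map]
    exact (isUnit_iff_ne_zero.2
      (leadingCoeff_ne_zero.2 (nonZeroDivisors.ne_zero y.2))).map _
  let θ : FractionRing K[X] →+* B := IsLocalization.lift hg
  have hθ (q) : θ (algebraMap _ _ q) = g q := IsLocalization.lift_eq hg q
  let τ : (MvPolynomial (Fin n) K[X])[X] →+* MvPolynomial (Fin n) (FractionRing K[X])[X] :=
    eval₂RingHom (MvPolynomial.map (mapRingHom κ))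
      (MvPolynomial.C (C (algebraMap K[X] (FractionRing K[X]) X)))
  let Φ : MvPolynomial (Fin n) (FractionRing K[X])[X] →+* B :=
    MvPolynomial.eval₂Hom (eval₂RingHom θ (algebraMap S[X] B (C (φ (MvPolynomial.C X)))))
      fun i => algebraMap S[X] B (C (φ (MvPolynomial.X i)))
  refine ⟨τ, Φ, fun q => by simp [τ, κ], ringHom_ext'
    (MvPolynomial.ringHom_ext' (ringHom_ext' (RingHom.ext fun r => ?_) ?_) fun i => ?_) ?_⟩
  all_goals simp [Φ, τ, κ, hθ, g]

variable {ι : Type*} [DecidableEq ι] [Fintype ι]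

theorem diagonalizable_of_forall_isMaximal {R : Type*} [CommRing R] [IsDomain R]
    [IsNoetherianRing R] {p : R} {e : Matrix ι ι R[X]} (he : MatModEq (C p) (e * e) e)
    (hloc : ∀ (m : Ideal R) [m.IsMaximal],
      let φ := (algebraMap (Localization.AtPrime m)[X]
        (Localization (monicSubmonoid (Localization.AtPrime m)))).comp
          (mapRingHom (algebraMap R (Localization.AtPrime m)))
      Diagonalizable (φ (C p)) (e.map φ))
    (h₀ : Diagonalizable p (e.map (evalRingHom 0))) : Diagonalizable (C p) e := by
  refine Diagonalizable.of_conjMod (conjMod_eval_zero_of_forall_isMaximal fun m _ => ?_) (h₀.map C)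
  set S := Localization.AtPrime m
  have hC : mapRingHom (algebraMap R S) (C p) = C (algebraMap R S p) := map_C _
  rw [← hC]
  by_cases hpm : p ∈ m
  · rw [hC]
    refine diagonalizable_of_monicLocalization (Localization (monicSubmonoid S))
      ((IsLocalization.AtPrime.to_map_mem_maximal_iff _ m _).2 hpm)
      (hC ▸ he.map_idempotent _) ?_
    rw [← hC]
    exact hloc m
  · refine ⟨∅, .of_matModEq fun i j => IsUnit.dvd ?_⟩
    rw [hC]
    exact isUnit_C.2 (IsLocalization.map_units S (⟨p, hpm⟩ : m.primeCompl))

universe u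

theorem diagonalizable_mvPolynomial (n : ℕ) : ∀ {K : Type u} [Field K] {p : K[X]},
    Irreducible p → ∀ {e : Matrix ι ι (MvPolynomial (Fin n) K[X])},
    MatModEq (MvPolynomial.C p) (e * e) e → Diagonalizable (MvPolynomial.C p) e := by
  induction n with
  | zero =>
    intro K _ p hp e he
    let f := MvPolynomial.isEmptyRingEquiv K[X] (Fin 0)
    have hf : f (MvPolynomial.C p) = p := f.apply_symm_apply p
    have he' := he.map_idempotent (f : _ →+* K[X])
    refine .of_map_ringEquiv f ?_
    rw [RingEquiv.coe_toRingHom, hf] at he'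
    rw [hf]
    exact diagonalizable_of_isMaximal (PrincipalIdealRing.isMaximal_of_irreducible hp) he'
  | succ n ih =>
    intro K _ p hp e he
    let f := (MvPolynomial.finSuccEquiv K[X] n).toRingEquiv
    have hf : f (MvPolynomial.C p) = C (MvPolynomial.C p) := by
      simp [f, MvPolynomial.finSuccEquiv_apply]
    have he' := he.map_idempotent (B := (MvPolynomial (Fin n) K[X])[X]) f
    refine .of_map_ringEquiv (B := (MvPolynomial (Fin n) K[X])[X]) f ?_
    rw [RingEquiv.coe_toRingHom, hf] at he'
    rw [hf]
    refine diagonalizable_of_forall_isMaximal he' (fun m _ => ?_) ?_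
    · obtain ⟨τ, Φ, hτ, hΦτ⟩ := exists_comp_eq_algebraMap_comp_mapRingHom n
        (K := K) (S := Localization.AtPrime m) (algebraMap _ _)
        (Localization (monicSubmonoid (Localization.AtPrime m)))
      have h := he'.map_idempotent (B := MvPolynomial (Fin n) (FractionRing K[X])[X]) τ
      rw [hτ] at h
      have h' := (ih (irreducible_map_fractionRing hp) h).map
        (B := Localization (monicSubmonoid (Localization.AtPrime m))) Φ
      rw [← hτ] at h'
      rw [← hΦτ]
      exact h'
    · have h₀ := he'.map_idempotent (evalRingHom 0)
      rw [coe_evalRingHom, eval_C] at h₀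
      exact ih hp h₀

end PolynomialRings

section Minors

variable {A : Type*} [CommRing A] {l l' m m' : ℕ}

/-- The determinantal ideal generated by the `i × i` minors. -/
def minorsIdeal (i : ℕ) (M : Matrix (Fin l) (Fin m) A) : Ideal A := Ideal.span (minorsSet i M)

theorem minorsIdeal_le_span_singleton_iff {i : ℕ} {M : Matrix (Fin l) (Fin m) A} {d : A} :
    minorsIdeal i M ≤ Ideal.span {d} ↔ ∀ a ∈ minorsSet i M, d ∣ a := by
  simp only [minorsIdeal, Ideal.span_le, Set.subset_def, SetLike.mem_coe, Ideal.mem_span_singleton]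

theorem det_submatrix_fin_mem_minorsIdeal {i : ℕ} (M : Matrix (Fin l) (Fin m) A)
    (f : Fin i → Fin l) (g : Fin i → Fin m) : (M.submatrix f g).det ∈ minorsIdeal i M := by
  by_cases hf : Function.Injective f
  · by_cases hg : Function.Injective g
    · have hmem : (M.submatrix (f ∘ Tuple.sort f) (g ∘ Tuple.sort g)).det ∈ minorsIdeal i M :=
        Ideal.subset_span ⟨_, _,
          (Tuple.monotone_sort f).strictMono_of_injective (hf.comp (Tuple.sort f).injective),
          (Tuple.monotone_sort g).strictMono_of_injective (hg.comp (Tuple.sort g).injective), rfl⟩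
      have hsort : M.submatrix (f ∘ Tuple.sort f) (g ∘ Tuple.sort g) =
          ((M.submatrix f g).submatrix (Tuple.sort f) id).submatrix id (Tuple.sort g) := rfl
      rw [hsort, Matrix.det_permute', Matrix.det_permute, ← mul_assoc] at hmem
      exact (Ideal.unit_mul_mem_iff_mem _ (((Equiv.Perm.sign _).isUnit.map (Int.castRingHom A)).mul
        ((Equiv.Perm.sign _).isUnit.map (Int.castRingHom A)))).1 hmem
    · obtain ⟨a, b, hab, hne⟩ := Function.not_injective_iff.1 hg
      rw [Matrix.det_zero_of_column_eq hne fun c => by simp [hab]]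
      exact zero_mem _
  · obtain ⟨a, b, hab, hne⟩ := Function.not_injective_iff.1 hf
    rw [Matrix.det_zero_of_row_eq hne (by ext c; simp [hab])]
    exact zero_mem _

theorem det_submatrix_mem_minorsIdeal {κ : Type*} [Fintype κ] [DecidableEq κ] {i : ℕ}
    (hκ : Fintype.card κ = i) (M : Matrix (Fin l) (Fin m) A) (f : κ → Fin l) (g : κ → Fin m) :
    (M.submatrix f g).det ∈ minorsIdeal i M := by
  let ε := (Fintype.equivFinOfCardEq hκ).symm
  rw [← Matrix.det_submatrix_equiv_self ε, Matrix.submatrix_submatrix]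
  exact det_submatrix_fin_mem_minorsIdeal M _ _

theorem minorsIdeal_transpose (i : ℕ) (M : Matrix (Fin l) (Fin m) A) :
    minorsIdeal i M.transpose = minorsIdeal i M := by
  refine congrArg Ideal.span (Set.ext fun a => ?_)
  constructor <;> rintro ⟨f, g, hf, hg, rfl⟩
  · exact ⟨g, f, hg, hf, Matrix.det_transpose (M.submatrix g f)⟩
  · exact ⟨g, f, hg, hf, (Matrix.det_transpose (M.submatrix f g)).symm⟩

theorem minorsIdeal_mul_le_right (i : ℕ) (U : Matrix (Fin l') (Fin l) A)
    (M : Matrix (Fin l) (Fin m) A) : minorsIdeal i (U * M) ≤ minorsIdeal i M := by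
  refine Ideal.span_le.2 ?_
  rintro _ ⟨f, g, -, -, rfl⟩
  have hrows : (U * M).submatrix f g = fun a => ∑ b, U (f a) b • fun c => M b (g c) := by
    ext a c
    simp [Matrix.mul_apply, Finset.sum_apply]
  rw [hrows]
  change (Matrix.detRowAlternating : (Fin i → A) [⋀^Fin i]→ₗ[A] A).toMultilinearMap _ ∈ _
  rw [MultilinearMap.map_sum]
  refine sum_mem fun r _ => ?_
  rw [MultilinearMap.map_smul_univ]
  exact Ideal.mul_mem_left _ _ (det_submatrix_fin_mem_minorsIdeal M r g)

theorem minorsIdeal_mul_le_left (i : ℕ) (M : Matrix (Fin l) (Fin m) A)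
    (V : Matrix (Fin m) (Fin m') A) : minorsIdeal i (M * V) ≤ minorsIdeal i M := by
  rw [← minorsIdeal_transpose i (M * V), Matrix.transpose_mul, ← minorsIdeal_transpose i M]
  exact minorsIdeal_mul_le_right i _ _

theorem MatrixEquiv.symm {M N : Matrix (Fin l) (Fin m) A} (h : MatrixEquiv M N) :
    MatrixEquiv N M := by
  obtain ⟨U, V, hU, hV, rfl⟩ := h
  refine ⟨U⁻¹, V⁻¹, Matrix.isUnit_nonsing_inv_det U hU, Matrix.isUnit_nonsing_inv_det V hV, ?_⟩
  rw [Matrix.mul_assoc, Matrix.mul_assoc, Matrix.mul_nonsing_inv _ hV, Matrix.mul_one,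
    Matrix.nonsing_inv_mul_cancel_left _ _ hU]

theorem MatrixEquiv.minorsIdeal_le {M N : Matrix (Fin l) (Fin m) A} (h : MatrixEquiv M N)
    (i : ℕ) : minorsIdeal i M ≤ minorsIdeal i N := by
  obtain ⟨U, V, -, -, rfl⟩ := h
  exact (minorsIdeal_mul_le_left i _ V).trans (minorsIdeal_mul_le_right i U N)

theorem MatrixEquiv.minorsIdeal_eq {M N : Matrix (Fin l) (Fin m) A} (h : MatrixEquiv M N)
    (i : ℕ) : minorsIdeal i M = minorsIdeal i N :=
  (h.minorsIdeal_le i).antisymm (h.symm.minorsIdeal_le i)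

theorem minorsSet_zero (M : Matrix (Fin l) (Fin m) A) : minorsSet 0 M = {1} := by
  ext a
  constructor
  · rintro ⟨f, g, -, -, rfl⟩
    exact Matrix.det_isEmpty
  · rintro rfl
    exact ⟨Fin.elim0, Fin.elim0, fun i => i.elim0, fun i => i.elim0, Matrix.det_isEmpty.symm⟩

theorem reducedMinorsUnitIdeal_zero (M : Matrix (Fin l) (Fin m) A) :
    ReducedMinorsUnitIdeal 0 M := by
  refine ⟨1, ?_, ?_⟩ <;> simp [minorsSet_zero, IsGcdOf]

theorem ReducedMinorsUnitIdeal.mem_minorsIdeal {i : ℕ} {M : Matrix (Fin l) (Fin m) A}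
    (h : ReducedMinorsUnitIdeal i M) {d : A} (hd : IsGcdOf d (minorsSet i M)) :
    d ∈ minorsIdeal i M := by
  obtain ⟨d', hd', htop⟩ := h
  refine Ideal.mem_of_dvd _ (hd.2 d' hd'.1) ?_
  have hle : Ideal.span {d'} * Ideal.span {b | d' * b ∈ minorsSet i M} ≤ minorsIdeal i M := by
    rw [Ideal.span_mul_span', Set.singleton_mul]
    exact Ideal.span_mono (Set.image_subset_iff.2 fun b hb => hb)
  rw [htop, Ideal.mul_top] at hle
  exact hle (Ideal.mem_span_singleton_self d')

end Minors

section BorderedMinors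

variable {A ι κ μ : Type*} [CommRing A] [Fintype μ] [DecidableEq μ]

theorem det_submatrix_diagonal_mul [Fintype ι] [DecidableEq ι] (d : ι → A) (G : Matrix ι κ A)
    (f : μ → ι) (g : μ → κ) :
    ((Matrix.diagonal d * G).submatrix f g).det = (∏ a, d (f a)) * (G.submatrix f g).det := by
  rw [← Matrix.det_mul_column]
  congr 1
  ext a b
  simp [Matrix.diagonal_mul]

theorem det_fromBlocks_eq_sub [IsDomain A] (d : Matrix Unit Unit A) (r : Matrix Unit μ A)
    (c : Matrix μ Unit A) {M : Matrix μ μ A} (hM : M.det ≠ 0) :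
    (Matrix.fromBlocks d r c M).det = (M.det • d - r * M.adjugate * c) () () := by
  have hmul : Matrix.fromBlocks d r c M *
      Matrix.fromBlocks (M.det • (1 : Matrix Unit Unit A)) 0 (-(M.adjugate * c)) 1 =
      Matrix.fromBlocks (M.det • d - r * M.adjugate * c) r 0 M := by
    rw [Matrix.fromBlocks_multiply]
    congr 1
    · simp [sub_eq_add_neg, Matrix.mul_assoc]
    · simp
    · rw [Matrix.mul_neg, ← Matrix.mul_assoc, Matrix.mul_adjugate]
      simp
    · simp
  have hdet := congrArg Matrix.det hmul
  rw [Matrix.det_mul, Matrix.det_fromBlocks_zero₁₂, Matrix.det_fromBlocks_zero₂₁] at hdet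
  exact mul_right_cancel₀ hM (by simpa using hdet)

/-- The submatrix of `G` with rows `f` and columns `g`, bordered by the row `i` and the
column `j`. -/
def borderedSubmatrix (G : Matrix ι κ A) (f : μ → ι) (g : μ → κ) (i : ι) (j : κ) :
    Matrix (Unit ⊕ μ) (Unit ⊕ μ) A :=
  G.submatrix (Sum.elim (fun _ => i) f) (Sum.elim (fun _ => j) g)

theorem det_borderedSubmatrix [IsDomain A] (G : Matrix ι κ A) {f : μ → ι} {g : μ → κ}
    (h : (G.submatrix f g).det ≠ 0) (i : ι) (j : κ) :
    (borderedSubmatrix G f g i j).det = (G.submatrix f g).det * G i j -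
      (G.submatrix id g * (G.submatrix f g).adjugate * G.submatrix f id) i j := by
  have hblocks : borderedSubmatrix G f g i j = Matrix.fromBlocks (G.submatrix (fun _ => i)
      fun _ => j) (G.submatrix (fun _ => i) g) (G.submatrix f fun _ => j) (G.submatrix f g) := by
    ext (a | a) (b | b) <;> rfl
  rw [hblocks, det_fromBlocks_eq_sub _ _ _ h]
  rfl

theorem smul_matModEq_of_dvd_det_borderedSubmatrix [IsDomain A] {p : A} {G : Matrix ι κ A}
    {f : μ → ι} {g : μ → κ} (h : ∀ i j, p ∣ (borderedSubmatrix G f g i j).det)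
    (h₀ : (G.submatrix f g).det ≠ 0) :
    MatModEq p ((G.submatrix f g).det • G)
      (G.submatrix id g * (G.submatrix f g).adjugate * G.submatrix f id) := fun i j => by
  rw [Matrix.smul_apply, smul_eq_mul, ← det_borderedSubmatrix G h₀]
  exact h i j

end BorderedMinors

section InnerInverse

variable {A ι κ : Type*} [CommRing A] [Fintype ι] [Fintype κ] {p : A}

/-- The ideal of all `a` such that `a • G` has, modulo `p`, the form `G * H * G`; it is the unit
ideal exactly when `G` has an inner inverse modulo `p`. -/
def innerInverseIdeal (p : A) (G : Matrix ι κ A) : Ideal A where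
  carrier := {a | ∃ H : Matrix κ ι A, MatModEq p (a • G) (G * H * G)}
  add_mem' := fun ⟨H, h⟩ ⟨H', h'⟩ => ⟨H + H', by
    rw [add_smul, Matrix.mul_add, Matrix.add_mul]
    exact h.add h'⟩
  zero_mem' := ⟨0, MatModEq.of_eq (by simp)⟩
  smul_mem' := fun c a ⟨H, h⟩ => ⟨c • H, by
    rw [smul_eq_mul, mul_smul, Matrix.mul_smul, Matrix.smul_mul]
    exact h.smul c⟩

/-- The `k × k` minors of `G` all of whose bordered minors are divisible by `p`. Where such a
minor is nonzero modulo a prime containing `p`, it exhibits the rank of `G` there as `k`. -/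
def pivotMinors (p : A) (k : ℕ) (G : Matrix ι κ A) : Set A :=
  {δ | ∃ (f : Fin k → ι) (g : Fin k → κ),
    (∀ i j, p ∣ (borderedSubmatrix G f g i j).det) ∧ δ = (G.submatrix f g).det}

theorem span_insert_pivotMinors_le [IsDomain A] (p : A) (k : ℕ) (G : Matrix ι κ A) :
    Ideal.span (insert p (pivotMinors p k G)) ≤ innerInverseIdeal p G := by
  classical
  refine Ideal.span_le.2 (Set.insert_subset ⟨0, fun i j => by simp⟩ ?_)
  rintro _ ⟨f, g, hborder, rfl⟩
  by_cases h₀ : (G.submatrix f g).det = 0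
  · rw [h₀]
    exact zero_mem _
  · refine ⟨(1 : Matrix κ κ A).submatrix id g * (G.submatrix f g).adjugate *
      (1 : Matrix ι ι A).submatrix f id, ?_⟩
    have hrows : G.submatrix f id = (1 : Matrix ι ι A).submatrix f id * G := by
      simpa using Matrix.submatrix_mul 1 G f id id Function.bijective_id
    have hcols : G.submatrix id g = G * (1 : Matrix κ κ A).submatrix id g := by
      simpa using Matrix.submatrix_mul G 1 id id g Function.bijective_id
    have h := smul_matModEq_of_dvd_det_borderedSubmatrix hborder h₀
    rw [hrows, hcols] at h
    simpa only [Matrix.mul_assoc] using h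

variable [DecidableEq ι]

theorem one_sub_mul_idempotent {G : Matrix ι κ A} {H : Matrix κ ι A}
    (h : MatModEq p ((1 - G * H) * G) 0) :
    MatModEq p ((1 - G * H) * (1 - G * H)) (1 - G * H) := by
  have h' := (MatModEq.refl (1 - G * H)).sub (h.mul_right H)
  rwa [Matrix.zero_mul, sub_zero, Matrix.mul_assoc, ← mul_one_sub] at h'

theorem coordProj_compl (T : Finset ι) : coordProj A Tᶜ = 1 - coordProj A T := by
  ext i j
  by_cases hi : i ∈ T <;> simp [coordProj, Matrix.diagonal_apply, Matrix.one_apply, hi]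

theorem card_compl_le_rank_map {L : Type*} [Field L] {φ : A →+* L} (hφ : φ p = 0)
    {G : Matrix ι κ A} {H : Matrix κ ι A} {T : Finset ι}
    (h : ConjMod p (1 - G * H) (coordProj A T)) : Tᶜ.card ≤ (G.map φ).rank := by
  obtain ⟨W, hW, hWe⟩ := h.map φ
  have he : (1 - G * H).map φ = 1 - G.map φ * H.map φ := by
    rw [Matrix.map_sub _ (map_sub φ), Matrix.map_one _ (map_zero φ) (map_one φ), Matrix.map_mul]
  rw [hφ, Intertwines.zero_iff, he, coordProj_map, Matrix.mul_sub, Matrix.mul_one] at hWe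
  have hcompl : coordProj L Tᶜ * W = W * (G.map φ * H.map φ) := by
    rw [coordProj_compl, Matrix.sub_mul, Matrix.one_mul, ← hWe, sub_sub_cancel]
  have hrank := congrArg Matrix.rank hcompl
  rw [Matrix.rank_mul_eq_left_of_isUnit_det _ _ hW, rank_coordProj,
    Matrix.rank_mul_eq_right_of_isUnit_det _ _ hW] at hrank
  exact hrank.trans_le (Matrix.rank_mul_le_left _ _)

end InnerInverse

section RowReduction

variable {A ι κ : Type*} [CommRing A] {p : A}

theorem dvd_mul_apply_of_intertwines_coordProj [Fintype ι] [DecidableEq ι]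
    {W e : Matrix ι ι A} {G : Matrix ι κ A} {T : Finset ι}
    (hW : Intertwines p W e (coordProj A T)) (h : MatModEq p (e * G) 0) {i : ι}
    (hi : i ∈ T) (j : κ) : p ∣ (W * G) i j := by
  have h' := (((MatModEq.symm hW).mul_right G).trans
    (by rw [Matrix.mul_assoc]; exact h.mul_left W)) i j
  rwa [Matrix.mul_assoc, coordProj_mul_apply, if_pos hi, Matrix.mul_zero, Matrix.zero_apply,
    sub_zero] at h'

variable [IsDomain A] {k : ℕ}

theorem rank_map_le_of_mem_pivotMinors [Fintype κ] {L : Type*} [Field L] {φ : A →+* L}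
    (hφ : φ p = 0) {G : Matrix ι κ A} {δ : A} (hδ : δ ∈ pivotMinors p k G) (hφδ : φ δ ≠ 0) :
    (G.map φ).rank ≤ k := by
  obtain ⟨f, g, hborder, rfl⟩ := hδ
  have h₀ : (G.submatrix f g).det ≠ 0 := fun h => hφδ (by rw [h, map_zero])
  have h := (smul_matModEq_of_dvd_det_borderedSubmatrix hborder h₀).map_eq hφ
  have hsmul : ((G.submatrix f g).det • G).map φ = φ (G.submatrix f g).det • G.map φ := by
    ext i j
    simp
  rw [← Matrix.rank_smul_of_mem_nonZeroDivisors _ (mem_nonZeroDivisors_of_ne_zero hφδ), ← hsmul, h,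
    Matrix.map_mul]
  exact (Matrix.rank_mul_le_left _ _).trans
    ((Matrix.rank_le_card_width _).trans_eq (Fintype.card_fin k))

theorem card_compl_le_of_span_insert_pivotMinors_eq_top [Fintype ι] [Fintype κ]
    [DecidableEq ι] (hp : ¬IsUnit p) {G : Matrix ι κ A}
    (htop : Ideal.span (insert p (pivotMinors p k G)) = ⊤) {H : Matrix κ ι A} {T : Finset ι}
    (h : ConjMod p (1 - G * H) (coordProj A T)) : Tᶜ.card ≤ k := by
  obtain ⟨m, hm, hpm⟩ := exists_max_ideal_of_mem_nonunits hp
  let _ : Field (A ⧸ m) := Ideal.Quotient.field m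
  have hφ : Ideal.Quotient.mk m p = 0 := Ideal.Quotient.eq_zero_iff_mem.2 hpm
  obtain ⟨δ, hδ, hδm⟩ : ∃ δ ∈ pivotMinors p k G, δ ∉ m := by
    by_contra! hle
    exact hm.ne_top (top_le_iff.1 (htop ▸ Ideal.span_le.2 (Set.insert_subset hpm hle)))
  exact (card_compl_le_rank_map hφ h).trans (rank_map_le_of_mem_pivotMinors hφ hδ
    (mt Ideal.Quotient.eq_zero_iff_mem.1 hδm))

theorem exists_isUnit_det_mul_eq_diagonal_mul [Finite κ] {l : ℕ} (hp : ¬IsUnit p)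
    (hdiag : ∀ e : Matrix (Fin l) (Fin l) A, MatModEq p (e * e) e → Diagonalizable p e)
    {G : Matrix (Fin l) κ A} (htop : Ideal.span (insert p (pivotMinors p k G)) = ⊤) :
    ∃ (U : Matrix (Fin l) (Fin l) A) (G₁ : Matrix (Fin l) κ A), IsUnit U.det ∧
      U * G = Matrix.diagonal (fun i : Fin l => if (i : ℕ) < k then 1 else p) * G₁ := by
  have := Fintype.ofFinite κ
  obtain ⟨H, hH⟩ : (1 : A) ∈ innerInverseIdeal p G :=
    span_insert_pivotMinors_le p k G (htop ▸ Submodule.mem_top)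
  have heG : MatModEq p ((1 - G * H) * G) 0 := by
    have h := hH.sub (MatModEq.refl (G * H * G))
    rw [sub_self, one_smul] at h
    rwa [Matrix.sub_mul, Matrix.one_mul]
  obtain ⟨T, hT⟩ := hdiag _ (one_sub_mul_idempotent heG)
  have hcard : (Finset.univ.filter fun i : Fin l => ¬(i : ℕ) < k).card ≤ T.card := by
    have h := card_compl_le_of_span_insert_pivotMinors_eq_top hp htop hT
    rw [Finset.card_compl, Fintype.card_fin] at h
    rw [Finset.filter_not, Finset.card_sdiff_of_subset (Finset.filter_subset _ _),
      Fin.card_filter_val_lt, Finset.card_univ, Fintype.card_fin]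
    omega
  obtain ⟨T', hT', -, hcard'⟩ := Finset.exists_subsuperset_card_eq (Finset.subset_univ _) hcard
    (Finset.card_le_univ T)
  obtain ⟨U, hU, hUe⟩ := hT.trans (.coordProj_of_card_eq p hcard'.symm)
  have hdvd (i : Fin l) (j : κ) : (if (i : ℕ) < k then 1 else p) ∣ (U * G) i j := by
    split_ifs with hi
    · exact one_dvd _
    · exact dvd_mul_apply_of_intertwines_coordProj hUe heG (hT' (by simpa using hi)) j
  choose G₁ hG₁ using hdvd
  refine ⟨U, Matrix.of G₁, hU, ?_⟩
  ext i j
  rw [Matrix.diagonal_mul, hG₁, Matrix.of_apply]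

end RowReduction

section SmithExponents

theorem sum_Iio_le_sum_of_strictMono {k l : ℕ} (hk : k < l) {s : Fin l → ℕ} (hs : Monotone s)
    {f : Fin k → Fin l} (hf : StrictMono f) :
    ∑ j ∈ Finset.Iio (⟨k, hk⟩ : Fin l), s j ≤ ∑ a, s (f a) := by
  have hle (a : Fin k) : Fin.castLE hk.le a ≤ f a := by
    simpa [Fin.le_def] using Finset.card_le_card_of_injOn f
      (s := Finset.Iio a) (t := Finset.Iio (f a))
      (fun b hb => Finset.mem_coe.2 (Finset.mem_Iio.2 (hf (Finset.mem_Iio.1 hb))))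
      hf.injective.injOn
  calc
    ∑ j ∈ Finset.Iio (⟨k, hk⟩ : Fin l), s j = ∑ a, s (Fin.castLE hk.le a) := by
      refine (Finset.sum_nbij (Fin.castLE hk.le) (fun a _ => ?_) (fun a _ b _ h => ?_)
        (fun j hj => ?_) fun _ _ => rfl).symm
      · simp [Fin.lt_def]
      · simpa using h
      · exact ⟨⟨j, Fin.lt_def.1 (Finset.mem_Iio.1 hj)⟩, Finset.mem_coe.2 (Finset.mem_univ _), rfl⟩
    _ ≤ ∑ a, s (f a) := Finset.sum_le_sum fun a _ => hs (hle a)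

variable {A : Type*} [CommRing A] {p : A} {k l m : ℕ} {s : Fin l → ℕ}

theorem isGcdOf_pow_sum_Iio {F : Matrix (Fin l) (Fin m) A}
    (hSmith : ∀ i : Fin l, (i : ℕ) ≤ k →
      IsGcdOf (p ^ ∑ j ∈ Finset.Iic i, s j) (minorsSet ((i : ℕ) + 1) F)) (hk : k < l) :
    IsGcdOf (p ^ ∑ j ∈ Finset.Iio (⟨k, hk⟩ : Fin l), s j) (minorsSet k F) := by
  cases k with
  | zero =>
    have hIio : Finset.Iio (⟨0, hk⟩ : Fin l) = ∅ := by
      ext j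
      simp [Fin.lt_def]
    simp [hIio, minorsSet_zero, IsGcdOf]
  | succ k =>
    have hIio : Finset.Iio (⟨k + 1, hk⟩ : Fin l) = Finset.Iic ⟨k, by omega⟩ := by
      ext j
      simp [Fin.lt_def, Fin.le_def]
    rw [hIio]
    exact hSmith ⟨k, by omega⟩ k.le_succ

variable [IsDomain A]

/-- The product of the diagonal entries in the rows of a minor either is the least possible power
of `p`, and then the bordered minors of `G` are divisible by `p`, or has a spare factor `p`. -/
theorem minorsIdeal_diagonal_pow_mul_le (hp : p ≠ 0) (hk : k < l) (hs : Monotone s) {q : ℕ}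
    (hsq : ∀ i, s i ≤ q) {G : Matrix (Fin l) (Fin m) A}
    (hG : minorsIdeal (k + 1) (Matrix.diagonal (fun i => p ^ s i) * G) ≤
      Ideal.span {p ^ (∑ j ∈ Finset.Iio (⟨k, hk⟩ : Fin l), s j + q + 1)}) :
    minorsIdeal k (Matrix.diagonal (fun i => p ^ s i) * G) ≤
      Ideal.span {p ^ ∑ j ∈ Finset.Iio (⟨k, hk⟩ : Fin l), s j} *
        Ideal.span (insert p (pivotMinors p k G)) := by
  set σ := ∑ j ∈ Finset.Iio (⟨k, hk⟩ : Fin l), s j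
  refine Ideal.span_le.2 ?_
  rintro _ ⟨f, g, hf, -, rfl⟩
  rw [SetLike.mem_coe, Ideal.mem_span_singleton_mul, det_submatrix_diagonal_mul,
    Finset.prod_pow_eq_pow_sum]
  obtain hσ | hσ := (sum_Iio_le_sum_of_strictMono hk hs hf).eq_or_lt
  · refine ⟨_, Ideal.subset_span (.inr ⟨f, g, fun i j => ?_, rfl⟩), by rw [← hσ]⟩
    have hmem := hG (det_submatrix_mem_minorsIdeal (by simp [add_comm])
      (Matrix.diagonal (fun i => p ^ s i) * G) (Sum.elim (fun _ : Unit => i) f)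
      (Sum.elim (fun _ => j) g))
    rw [Ideal.mem_span_singleton, det_submatrix_diagonal_mul, Finset.prod_pow_eq_pow_sum,
      Fintype.sum_sum_type] at hmem
    simp only [Finset.univ_unique, Finset.sum_singleton, Sum.elim_inl, Sum.elim_inr] at hmem
    have hpow : p ^ (s i + ∑ a, s (f a)) * p ∣ p ^ (σ + q + 1) := by
      rw [← pow_succ, ← hσ]
      exact pow_dvd_pow p (by have := hsq i; omega)
    exact (mul_dvd_mul_iff_left (pow_ne_zero _ hp)).1 (hpow.trans hmem)
  · obtain ⟨w, hw⟩ := Nat.exists_eq_add_of_lt hσ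
    refine ⟨p ^ (w + 1) * (G.submatrix f g).det, Ideal.mul_mem_right _ _ ?_, ?_⟩
    · exact Ideal.pow_mem_of_mem _ (Ideal.subset_span (.inl rfl)) _ w.succ_pos
    · rw [← mul_assoc, ← pow_add, hw, add_assoc]

theorem span_insert_pivotMinors_eq_top (hp : p ≠ 0) {F G : Matrix (Fin l) (Fin m) A}
    (hs : Monotone s)
    (hSmith : ∀ i : Fin l, (i : ℕ) ≤ k →
      IsGcdOf (p ^ ∑ j ∈ Finset.Iic i, s j) (minorsSet ((i : ℕ) + 1) F))
    (hk : k < l) {q : ℕ} (hsq : ∀ i : Fin l, (i : ℕ) < k → s i ≤ q) (hsq' : q < s ⟨k, hk⟩)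
    (hFG : MatrixEquiv F
      (Matrix.diagonal (fun i : Fin l => if (i : ℕ) < k then p ^ s i else p ^ q) * G))
    (hJ : ReducedMinorsUnitIdeal k F) :
    Ideal.span (insert p (pivotMinors p k G)) = ⊤ := by
  have hmin : (fun i : Fin l => if (i : ℕ) < k then p ^ s i else p ^ q) =
      fun i => p ^ min (s i) q := by
    ext1 i
    split_ifs with hi
    · rw [min_eq_left (hsq i hi)]
    · rw [min_eq_right (hsq'.le.trans (hs (Fin.le_def.2 (not_lt.1 hi))))]
  have hσ : ∑ j ∈ Finset.Iio (⟨k, hk⟩ : Fin l), min (s j) q =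
      ∑ j ∈ Finset.Iio (⟨k, hk⟩ : Fin l), s j :=
    Finset.sum_congr rfl fun j hj => min_eq_left (hsq j (Fin.lt_def.1 (Finset.mem_Iio.1 hj)))
  rw [hmin] at hFG
  have hpivot := minorsIdeal_diagonal_pow_mul_le (G := G) hp hk (hs.min monotone_const)
    (fun i => min_le_right (s i) q) ?_
  · have hmem := hpivot (hFG.minorsIdeal_eq k ▸
      hJ.mem_minorsIdeal (isGcdOf_pow_sum_Iio hSmith hk))
    rw [hσ, Ideal.mem_span_singleton_mul] at hmem
    obtain ⟨z, hz, hpz⟩ := hmem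
    rw [mul_eq_left₀ (pow_ne_zero _ hp)] at hpz
    exact (Ideal.eq_top_iff_one _).2 (hpz ▸ hz)
  · rw [← hFG.minorsIdeal_eq, minorsIdeal_le_span_singleton_iff, hσ]
    intro a ha
    refine (pow_dvd_pow p ?_).trans ((hSmith ⟨k, hk⟩ le_rfl).1 a ha)
    rw [← Finset.Iio_insert, Finset.sum_insert Finset.notMem_Iio_self]
    omega

end SmithExponents

section PolyImage

variable {K : Type*} [Field K]

/-- `K[x₀, …, xₙ]` as the polynomial ring in `x₁, …, xₙ` over `K[x₀]`. It makes the prime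
`polyImage n p` a constant polynomial. -/
noncomputable def polyImageEquiv (K : Type*) [Field K] (n : ℕ) :
    MvPolynomial (Fin (n + 1)) K ≃ₐ[K] MvPolynomial (Fin n) K[X] :=
  (MvPolynomial.renameEquiv K (finSuccEquiv n)).trans (MvPolynomial.optionEquivRight K (Fin n))

theorem polyImageEquiv_polyImage (n : ℕ) (p : K[X]) :
    polyImageEquiv K n (polyImage n p) = MvPolynomial.C p := by
  have h : polyImageEquiv K n (MvPolynomial.X 0) = MvPolynomial.C X := by
    simp [polyImageEquiv]
  rw [polyImage, ← Polynomial.aeval_algHom_apply, h]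
  induction p using Polynomial.induction_on' with
  | add p q hp hq => rw [map_add, hp, hq, map_add]
  | monomial n a =>
    rw [Polynomial.aeval_monomial, ← Polynomial.C_mul_X_pow_eq_monomial, map_mul, map_pow]
    rfl

theorem prime_polyImage (n : ℕ) {p : K[X]} (hp : Irreducible p) : Prime (polyImage n p) := by
  rw [← MulEquiv.prime_iff (polyImageEquiv K n), polyImageEquiv_polyImage,
    MvPolynomial.prime_C_iff]
  exact hp.prime

theorem diagonalizable_polyImage {ι : Type*} [Fintype ι] [DecidableEq ι] (n : ℕ) {p : K[X]}
    (hp : Irreducible p) {e : Matrix ι ι (MvPolynomial (Fin (n + 1)) K)}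
    (he : MatModEq (polyImage n p) (e * e) e) : Diagonalizable (polyImage n p) e := by
  let f := (polyImageEquiv K n).toRingEquiv
  have hf : f (polyImage n p) = MvPolynomial.C p := polyImageEquiv_polyImage n p
  have he' := he.map_idempotent (B := MvPolynomial (Fin n) K[X]) f
  refine .of_map_ringEquiv (B := MvPolynomial (Fin n) K[X]) f ?_
  rw [RingEquiv.coe_toRingHom, hf] at he'
  rw [hf]
  exact diagonalizable_mvPolynomial n hp he'

end PolyImage

theorem stmt8_general {K : Type*} [Field K] {n l m : ℕ} {p : K[X]} (hp : Irreducible p)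
    {F G : Matrix (Fin l) (Fin m) (MvPolynomial (Fin (n + 1)) K)} {s : Fin l → ℕ} (hs : Monotone s)
    {k : ℕ} (hk : k < l)
    (hSmith : ∀ i : Fin l, (i : ℕ) ≤ k →
      IsGcdOf (polyImage n p ^ ∑ j ∈ Finset.Iic i, s j) (minorsSet ((i : ℕ) + 1) F))
    {q : ℕ} (hsq : ∀ i : Fin l, (i : ℕ) < k → s i ≤ q) (hsq' : q < s ⟨k, hk⟩)
    (hFG : MatrixEquiv F
      (Matrix.diagonal (fun i : Fin l =>
        if (i : ℕ) < k then polyImage n p ^ s i else polyImage n p ^ q) * G))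
    (hJ : ReducedMinorsUnitIdeal k F) :
    ∃ (U : Matrix (Fin l) (Fin l) (MvPolynomial (Fin (n + 1)) K))
      (G₁ : Matrix (Fin l) (Fin m) (MvPolynomial (Fin (n + 1)) K)),
      IsUnit U.det ∧
      U * G = Matrix.diagonal (fun i : Fin l => if (i : ℕ) < k then 1 else polyImage n p) * G₁ :=
  have hprime := prime_polyImage n hp
  exists_isUnit_det_mul_eq_diagonal_mul hprime.not_isUnit
    (fun _ he => diagonalizable_polyImage n hp he)
    (span_insert_pivotMinors_eq_top hprime.ne_zero hs hSmith hk hsq hsq' hFG hJ)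

/-- let `F ∈ A^{l×l}` with `det F = p^t` (`p ∈ K[x₁]` irreducible, `t ≥ 1`)
and Smith form `diag(p^{s₁}, …, p^{s_l})`, `s₁ ≤ ⋯ ≤ s_l` (i.e.
`d_i(F) = p^{s₁ + ⋯ + s_i}` up to associates for every `i`).  If
`F ∼ diag(p^{s₁}, …, p^{s_k}, p^s, …, p^s) · G` with `s_k ≤ s < s_{k+1}` and
`J_i(F) = A` for `i = 1, …, k`, then there is `U ∈ GL_l(A)` with
`U·G = diag(1, …, 1, p, …, p) · G₁` (with `k` ones and `l − k` entries `p`)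
for some `G₁ ∈ A^{l×l}`. -/
theorem stmt8 {K : Type*} [Field K] {n l : ℕ} (p : Polynomial K) (hp : Irreducible p)
    (t : ℕ) (ht : 0 < t)
    (F : Matrix (Fin l) (Fin l) (MvPolynomial (Fin (n + 1)) K))
    (hdet : F.det = polyImage n p ^ t)
    (s : Fin l → ℕ) (hs : Monotone s)
    (hSmith : ∀ i : Fin l,
      IsGcdOf (polyImage n p ^ (∑ j ∈ Finset.Iic i, s j)) (minorsSet ((i : ℕ) + 1) F))
    (k : ℕ) (hk : k < l) (sv : ℕ)
    (hsk : ∀ i : Fin l, (i : ℕ) < k → s i ≤ sv) (hsk' : sv < s ⟨k, hk⟩)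
    (G : Matrix (Fin l) (Fin l) (MvPolynomial (Fin (n + 1)) K))
    (hFG : MatrixEquiv F
      (Matrix.diagonal (fun i : Fin l =>
        if (i : ℕ) < k then polyImage n p ^ s i else polyImage n p ^ sv) * G))
    (hJ : ∀ i : ℕ, 1 ≤ i → i ≤ k → ReducedMinorsUnitIdeal i F) :
    ∃ (U G₁ : Matrix (Fin l) (Fin l) (MvPolynomial (Fin (n + 1)) K)),
      IsUnit U.det ∧
      U * G = Matrix.diagonal (fun i : Fin l =>
        if (i : ℕ) < k then 1 else polyImage n p) * G₁ := by
  have hJ' : ReducedMinorsUnitIdeal k F :=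
    k.eq_zero_or_pos.elim (· ▸ reducedMinorsUnitIdeal_zero F) (hJ k · le_rfl)
  exact stmt8_general hp hs hk (fun i _ => hSmith i) hsk hsk' hFG hJ'
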